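/- arXiv:1311.1779 — 12 statements merged into one kernel-verified Lean document; each statement's English description precedes it below -/
import Mathlib

section
/- Let L be a field containing F_q, let M/L be a field extension and x ∈ M. Let i, j be positive integers and r = gcd(i, j). Then the intermediate field generated over L by Tr_i(x) and Tr_j(x) equals the intermediate field generated over L by Tr_r(x); in particular, if gcd(i, j) = 1 then L(Tr_i(x), Tr_j(x)) = L(x). -/
/-- The trace polynomial `Tr_i(x) = x + x^q + ⋯ + x^{q^{i-1}}`. -/
def Tr {R : Type*} [CommRing R] (q i : ℕ) (x : R) : R :=
  ∑ j ∈ Finset.range i, x ^ q ^ j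

/-!
By additivity of Frobenius, `Tr_{a+b}(x) = Tr_a(x) + Tr_b(x) ^ q ^ a`. Hence a subring containing
`Tr_a(x)` contains `Tr_{ac}(x)` for every `c`, and contains `Tr_b(x)` if and only if it contains
`Tr_{b mod a}(x)`. The Euclidean algorithm on the indices now shows that a subring contains
`Tr_i(x)` and `Tr_j(x)` exactly when it contains `Tr_{gcd(i, j)}(x)`.
-/

section CommRing

variable {A : Type*} [CommRing A]

@[simp]
theorem Tr_zero (q : ℕ) (x : A) : Tr q 0 x = 0 := by
  simp [Tr]

@[simp]
theorem Tr_one (q : ℕ) (x : A) : Tr q 1 x = x := by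
  simp [Tr]

theorem Tr_add (p e : ℕ) [ExpChar A p] (a b : ℕ) (x : A) :
    Tr (p ^ e) (a + b) x = Tr (p ^ e) a x + Tr (p ^ e) b x ^ (p ^ e) ^ a := by
  have frobenius_Tr : Tr (p ^ e) b x ^ (p ^ e) ^ a =
      ∑ k ∈ Finset.range b, x ^ (p ^ e) ^ (a + k) := by
    simp only [Tr, ← pow_mul p, sum_pow_char_pow]
    simp only [← pow_mul, ← pow_add, mul_add, add_comm]
  rw [frobenius_Tr, Tr, Finset.sum_range_add, Tr]

variable {S : Type*} [SetLike S A] [SubringClass S A] {K : S} {p e : ℕ} [ExpChar A p] {x : A}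

theorem Tr_mem_of_dvd {a b : ℕ} (hab : a ∣ b) (ha : Tr (p ^ e) a x ∈ K) :
    Tr (p ^ e) b x ∈ K := by
  obtain ⟨c, rfl⟩ := hab
  induction c with
  | zero => simp
  | succ c ih =>
    rw [Nat.mul_succ, Tr_add]
    exact add_mem ih (pow_mem ha _)

theorem Tr_mod_mem_iff {a b : ℕ} (ha : Tr (p ^ e) a x ∈ K) :
    Tr (p ^ e) (b % a) x ∈ K ↔ Tr (p ^ e) b x ∈ K := by
  have hmul : Tr (p ^ e) (a * (b / a)) x ∈ K := Tr_mem_of_dvd (dvd_mul_right a _) ha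
  conv_rhs => rw [← Nat.mod_add_div b a, Tr_add]
  exact (add_mem_cancel_right (pow_mem hmul _)).symm

theorem Tr_gcd_mem {i j : ℕ} (hi : Tr (p ^ e) i x ∈ K) (hj : Tr (p ^ e) j x ∈ K) :
    Tr (p ^ e) (i.gcd j) x ∈ K := by
  induction i, j using Nat.gcd.induction with
  | H0 j => rwa [Nat.gcd_zero_left]
  | H1 i j _ ih =>
    rw [Nat.gcd_rec]
    exact ih ((Tr_mod_mem_iff hi).2 hj) hi

theorem Tr_gcd_mem_iff {i j : ℕ} :
    Tr (p ^ e) (i.gcd j) x ∈ K ↔ Tr (p ^ e) i x ∈ K ∧ Tr (p ^ e) j x ∈ K :=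
  ⟨fun h => ⟨Tr_mem_of_dvd (i.gcd_dvd_left j) h, Tr_mem_of_dvd (i.gcd_dvd_right j) h⟩,
    fun h => Tr_gcd_mem h.1 h.2⟩

end CommRing

theorem intermediateField_adjoin_eq_of_algebra_adjoin_eq {L M : Type*} [Field L] [Field M]
    [Algebra L M] {s t : Set M} (h : Algebra.adjoin L s = Algebra.adjoin L t) :
    IntermediateField.adjoin L s = IntermediateField.adjoin L t := by
  ext y
  rw [IntermediateField.mem_adjoin_iff_div, IntermediateField.mem_adjoin_iff_div, h]

theorem expChar_of_ringHom_of_card_eq_prime_pow {p e : ℕ} (hp : p.Prime) {F A : Type*} [Field F]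
    [Fintype F] [NonAssocSemiring A] [Nontrivial A] (f : F →+* A)
    (hcard : Fintype.card F = p ^ e) : ExpChar A p := by
  have := Fact.mk hp
  have : CharP F p := charP_of_card_eq_prime_pow hcard
  have : ExpChar F p := .prime hp
  exact expChar_of_injective_ringHom f.injective p

theorem stmt_2_general {R A : Type*} [CommRing R] [CommRing A] [Algebra R A]
    (p e : ℕ) [ExpChar A p] (x : A) (i j : ℕ) :
    Algebra.adjoin R {Tr (p ^ e) i x, Tr (p ^ e) j x} =
        Algebra.adjoin R {Tr (p ^ e) (i.gcd j) x} ∧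
      (i.gcd j = 1 →
        Algebra.adjoin R {Tr (p ^ e) i x, Tr (p ^ e) j x} = Algebra.adjoin R {x}) := by
  have adjoin_pair : Algebra.adjoin R {Tr (p ^ e) i x, Tr (p ^ e) j x} =
      Algebra.adjoin R {Tr (p ^ e) (i.gcd j) x} := by
    refine eq_of_forall_ge_iff fun K => ?_
    simp only [Algebra.adjoin_le_iff, Set.pair_subset_iff, Set.singleton_subset_iff,
      SetLike.mem_coe, Tr_gcd_mem_iff]
  exact ⟨adjoin_pair, fun hcop => by rw [adjoin_pair, hcop, Tr_one]⟩

/-- For a field `L ⊇ F_q`, a field extension `M/L`, `x ∈ M` and positive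
integers `i, j` with `r = gcd(i,j)`, we have `L(Tr_i(x), Tr_j(x)) = L(Tr_r(x))`;
in particular if `gcd(i,j) = 1` then `L(Tr_i(x), Tr_j(x)) = L(x)`. -/
theorem stmt_2 (p e q : ℕ) (hp : p.Prime) (he : 0 < e) (hq : q = p ^ e)
    (Fq : Type*) [Field Fq] [Fintype Fq] (hcard : Fintype.card Fq = q)
    (L M : Type*) [Field L] [Field M] [Algebra Fq L] [Algebra L M]
    (x : M) (i j r : ℕ) (hi : 0 < i) (hj : 0 < j) (hr : r = Nat.gcd i j) :
    IntermediateField.adjoin L {Tr q i x, Tr q j x} = IntermediateField.adjoin L {Tr q r x}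
    ∧ (Nat.gcd i j = 1 →
        IntermediateField.adjoin L {Tr q i x, Tr q j x} = IntermediateField.adjoin L {x}) := by
  subst hq hr
  have := expChar_of_ringHom_of_card_eq_prime_pow hp
    ((algebraMap L M).comp (algebraMap Fq L)) hcard
  exact (stmt_2_general p e x i j).imp intermediateField_adjoin_eq_of_algebra_adjoin_eq
    fun h hcop => intermediateField_adjoin_eq_of_algebra_adjoin_eq (h hcop)
end

section
/- Let R be a commutative ring of characteristic p and q a power of the prime p. Let i, j, r be positive integers and a, b positive integers with a·i − b·j = r. Then for every x ∈ R, Σ_{α=0}^{a−1} Tr_i(x)^{q^{α·i}} − ( Σ_{β=0}^{b−1} Tr_j(x)^{q^{β·j}} )^{q^r} = Tr_r(x). -/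
/-!
If `y ↦ y ^ q` is additive, then raising `Tr q n x` to the power `q ^ m` shifts its exponents from
`0, …, n - 1` to `m, …, m + n - 1`. The left-hand sum therefore tiles `[0, a * i)` by blocks of
length `i`, while the subtracted sum tiles `[r, r + b * j)` by blocks of length `j`; since
`a * i = r + b * j`, what is left is `[0, r)`.
-/

theorem add_pow_pow_of_add_pow {R : Type*} [Semiring R] {q : ℕ}
    (hq : ∀ y z : R, (y + z) ^ q = y ^ q + z ^ q) (m : ℕ) (y z : R) :
    (y + z) ^ q ^ m = y ^ q ^ m + z ^ q ^ m := by
  induction m with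
  | zero => simp only [pow_zero, pow_one]
  | succ m ih => simp only [pow_succ, pow_mul, ih, hq]

theorem sum_pow_pow_of_add_pow {ι R : Type*} [Ring R] {q : ℕ}
    (hq : ∀ y z : R, (y + z) ^ q = y ^ q + z ^ q) (m : ℕ) (s : Finset ι) (f : ι → R) :
    (∑ k ∈ s, f k) ^ q ^ m = ∑ k ∈ s, f k ^ q ^ m :=
  map_sum (AddMonoidHom.mk' (fun y : R => y ^ q ^ m) (add_pow_pow_of_add_pow hq m)) f s

section Trace

variable {R : Type*} [CommRing R] {q : ℕ}

theorem tr_pow_pow (hq : ∀ y z : R, (y + z) ^ q = y ^ q + z ^ q) (n m : ℕ) (x : R) :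
    Tr q n x ^ q ^ m = ∑ k ∈ Finset.range n, x ^ q ^ (m + k) := by
  simp only [Tr, sum_pow_pow_of_add_pow hq, ← pow_mul, ← pow_add, add_comm m]

theorem tr_add (hq : ∀ y z : R, (y + z) ^ q = y ^ q + z ^ q) (m n : ℕ) (x : R) :
    Tr q (m + n) x = Tr q m x + Tr q n x ^ q ^ m := by
  rw [tr_pow_pow hq]
  exact Finset.sum_range_add (fun k => x ^ q ^ k) m n

theorem sum_tr_pow_pow_mul (hq : ∀ y z : R, (y + z) ^ q = y ^ q + z ^ q) (a i : ℕ) (x : R) :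
    ∑ α ∈ Finset.range a, Tr q i x ^ q ^ (α * i) = Tr q (a * i) x := by
  induction a with
  | zero => simp [Tr]
  | succ a ih => rw [Finset.sum_range_succ, ih, Nat.succ_mul, tr_add hq]

theorem stmt_3_general (hq : ∀ y z : R, (y + z) ^ q = y ^ q + z ^ q)
    {i j r a b : ℕ} (hab : a * i = b * j + r) (x : R) :
    (∑ α ∈ Finset.range a, Tr q i x ^ q ^ (α * i))
      - (∑ β ∈ Finset.range b, Tr q j x ^ q ^ (β * j)) ^ q ^ r = Tr q r x := by
  rw [sum_tr_pow_pow_mul hq, sum_tr_pow_pow_mul hq, sub_eq_iff_eq_add, hab, add_comm (b * j),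
    tr_add hq]

end Trace

/-- In a commutative ring of characteristic `p`, with `q` a power of `p`,
if `a·i − b·j = r` (all positive integers), then
`Σ_{α=0}^{a−1} Tr_i(x)^{q^{α·i}} − (Σ_{β=0}^{b−1} Tr_j(x)^{q^{β·j}})^{q^r} = Tr_r(x)`. -/
theorem stmt_3 (p e q : ℕ) (hp : p.Prime) (he : 0 < e) (hq : q = p ^ e)
    (R : Type*) [CommRing R] [CharP R p]
    (i j r a b : ℕ) (hi : 0 < i) (hj : 0 < j) (hrpos : 0 < r)
    (ha : 0 < a) (hb : 0 < b) (hab : a * i = b * j + r) (x : R) :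
    (∑ α ∈ Finset.range a, (Tr q i x) ^ q ^ (α * i))
      - (∑ β ∈ Finset.range b, (Tr q j x) ^ q ^ (β * j)) ^ q ^ r = Tr q r x := by
  have : Fact p.Prime := ⟨hp⟩
  exact stmt_3_general (fun y z => hq ▸ add_pow_char_pow y z p e) hab x
end

section
/- Let L be a field of characteristic p, q a power of p, n ≥ 2 an integer, 1 ≤ k < n, and a, b nonnegative integers with a·k − b·(n−k) = 1. Let R, S ∈ L satisfy Tr_{n−k}(R) + Tr_k(S) = 1, and set u := Σ_{α=0}^{a−1} R^{q^{α·k}} + ( Σ_{β=0}^{b−1} S^{q^{β·(n−k)}} )^{q}. Then Tr_k(u) = R + b·1_L and Tr_{n−k}(u) = −S + a·1_L. -/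
/-!
Let `φ` be the `q`-power map, an additive endomorphism, and write `[i]_g = 1 + g + ⋯ + g^{i-1}`,
so that `Tr_i(x) = [i]_φ x` and, with `m = n - k`, `u = [a]_{φ^k} R + φ [b]_{φ^m} S`.
These operators commute and `[k]_φ [a]_{φ^k} = [ak]_φ`, while `ak = bm + 1` gives
`[ak]_φ = 1 + φ [bm]_φ`. Since `φ` fixes `1 = [m]_φ R + [k]_φ S`,
`[k]_φ u = [ak]_φ R + φ [b]_{φ^m} [k]_φ S = R + φ [b]_{φ^m} ([m]_φ R + [k]_φ S) = R + b` and
`[m]_φ u + S = [a]_{φ^k} [m]_φ R + [ak]_φ S = [a]_{φ^k} ([m]_φ R + [k]_φ S) = a`.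
-/

theorem pow_smul_of_smul_eq_self {G X : Type*} [Monoid G] [MulAction G X] {g : G} {x : X}
    (hx : g • x = x) (n : ℕ) : g ^ n • x = x :=
  pow_mem (S := MulAction.stabilizerSubmonoid G x) hx n

section GeomSum

open Finset

variable {A : Type*} [Semiring A]

theorem geom_sum_mul_geom_sum_pow (x : A) (k a : ℕ) :
    (∑ i ∈ range k, x ^ i) * ∑ j ∈ range a, (x ^ k) ^ j = ∑ i ∈ range (a * k), x ^ i := by
  induction a with
  | zero => simp
  | succ a ih =>
    rw [sum_range_succ, mul_add, ih, add_one_mul, sum_range_add, sum_mul]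
    simp only [← pow_mul, ← pow_add, mul_comm k, add_comm]

theorem commute_geom_sum_self (x : A) (i : ℕ) : Commute (∑ j ∈ range i, x ^ j) x :=
  .sum_left _ _ _ fun j _ => .pow_self x j

theorem commute_geom_sum_geom_sum_pow (x : A) (i m b : ℕ) :
    Commute (∑ j ∈ range i, x ^ j) (∑ j ∈ range b, (x ^ m) ^ j) :=
  .sum_left _ _ _ fun _ _ => .sum_right _ _ _ fun _ _ =>
    ((Commute.refl x).pow_right m).pow_pow _ _

variable {M : Type*} [AddCommMonoid M] [Module A M]

theorem geom_sum_smul_of_smul_eq_self {g : A} {c : M} (hc : g • c = c) (n : ℕ) :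
    (∑ j ∈ range n, g ^ j) • c = n • c := by
  simp only [sum_smul, pow_smul_of_smul_eq_self hc, sum_const, card_range]

variable {f : A} {k m a b : ℕ} {r s c : M}

theorem geom_sum_smul_eq_add_nsmul (hab : a * k = b * m + 1) (hc : f • c = c)
    (hrs : (∑ i ∈ range m, f ^ i) • r + (∑ i ∈ range k, f ^ i) • s = c) :
    (∑ i ∈ range k, f ^ i) •
        ((∑ j ∈ range a, (f ^ k) ^ j) • r + f • (∑ j ∈ range b, (f ^ m) ^ j) • s) =
      r + b • c := by
  have comm_f : (∑ i ∈ range k, f ^ i) * f = f * ∑ i ∈ range k, f ^ i :=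
    commute_geom_sum_self f k
  set K := ∑ i ∈ range k, f ^ i
  set B := ∑ j ∈ range b, (f ^ m) ^ j
  have comm_B : K * B = B * K := commute_geom_sum_geom_sum_pow f k m b
  have trace_r : (K * ∑ j ∈ range a, (f ^ k) ^ j) • r =
      r + f • B • (∑ i ∈ range m, f ^ i) • r := by
    rw [geom_sum_mul_geom_sum_pow, hab, geom_sum_succ, ← geom_sum_mul_geom_sum_pow,
      commute_geom_sum_geom_sum_pow, add_smul, one_smul, mul_smul, mul_smul, add_comm]
  have trace_s : K • f • B • s = f • B • K • s := by
    rw [← mul_smul K, comm_f, mul_smul, ← mul_smul K, comm_B, mul_smul]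
  rw [smul_add, ← mul_smul, trace_r, trace_s, add_assoc, ← smul_add, ← smul_add, hrs,
    geom_sum_smul_of_smul_eq_self (pow_smul_of_smul_eq_self hc _), smul_comm, hc]

theorem geom_sum_smul_add_eq_nsmul (hab : a * k = b * m + 1) (hc : f • c = c)
    (hrs : (∑ i ∈ range m, f ^ i) • r + (∑ i ∈ range k, f ^ i) • s = c) :
    (∑ i ∈ range m, f ^ i) •
        ((∑ j ∈ range a, (f ^ k) ^ j) • r + f • (∑ j ∈ range b, (f ^ m) ^ j) • s) + s =
      a • c := by
  have comm_f : (∑ i ∈ range m, f ^ i) * f = f * ∑ i ∈ range m, f ^ i :=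
    commute_geom_sum_self f m
  set N := ∑ i ∈ range m, f ^ i
  set C := ∑ j ∈ range a, (f ^ k) ^ j
  have comm_C : N * C = C * N := commute_geom_sum_geom_sum_pow f m k a
  have trace_s : N • f • (∑ j ∈ range b, (f ^ m) ^ j) • s + s =
      C • (∑ i ∈ range k, f ^ i) • s := by
    rw [← mul_smul C, ← commute_geom_sum_geom_sum_pow, geom_sum_mul_geom_sum_pow, hab,
      geom_sum_succ, ← geom_sum_mul_geom_sum_pow, add_smul, one_smul, ← mul_smul, comm_f,
      mul_smul, mul_smul, mul_smul]
  rw [smul_add, add_assoc, trace_s, ← mul_smul, comm_C, mul_smul, ← smul_add, hrs,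
    geom_sum_smul_of_smul_eq_self (pow_smul_of_smul_eq_self hc _)]

end GeomSum

section Trace

open Finset

variable {A : Type*} [Semiring A] {q : ℕ} {φ : AddMonoid.End A}

theorem pow_smul_eq_pow_pow (hφ : ∀ x, φ x = x ^ q) (j : ℕ) (x : A) :
    φ ^ j • x = x ^ q ^ j := by
  induction j with
  | zero => simp
  | succ j ih => rw [pow_succ', mul_smul, ih, AddMonoid.End.smul_def, hφ, ← pow_mul, pow_succ]

theorem geom_sum_pow_smul_eq_sum (hφ : ∀ x, φ x = x ^ q) (i m : ℕ) (x : A) :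
    (∑ j ∈ range i, (φ ^ m) ^ j) • x = ∑ j ∈ range i, x ^ q ^ (j * m) := by
  simp only [sum_smul, ← pow_mul, pow_smul_eq_pow_pow hφ, mul_comm m]

variable {L : Type*} [CommRing L]

theorem geom_sum_smul_eq_Tr {φ : AddMonoid.End L} (hφ : ∀ x, φ x = x ^ q) (i : ℕ) (x : L) :
    (∑ j ∈ range i, φ ^ j) • x = Tr q i x := by
  simpa only [Tr, pow_one, mul_one] using geom_sum_pow_smul_eq_sum hφ i 1 x

theorem stmt_4_general {k m a b : ℕ}
    (hadd : ∀ x y : L, (x + y) ^ q = x ^ q + y ^ q) (hab : a * k = b * m + 1)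
    {R S : L} (hRS : Tr q m R + Tr q k S = 1) {u : L}
    (hu : u = (∑ α ∈ range a, R ^ q ^ (α * k)) + (∑ β ∈ range b, S ^ q ^ (β * m)) ^ q) :
    Tr q k u = R + (b : L) ∧ Tr q m u = -S + (a : L) := by
  let φ : AddMonoid.End L := AddMonoidHom.mk' (· ^ q) hadd
  have hφ (x : L) : φ x = x ^ q := rfl
  have fixes_one : φ • (1 : L) = 1 := one_pow q
  have hu_smul : u = (∑ j ∈ range a, (φ ^ k) ^ j) • R +
      φ • (∑ j ∈ range b, (φ ^ m) ^ j) • S := by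
    simp only [hu, geom_sum_pow_smul_eq_sum hφ, AddMonoid.End.smul_def, hφ]
  simp only [← geom_sum_smul_eq_Tr hφ] at hRS ⊢
  rw [hu_smul, eq_neg_add_iff_add_eq, add_comm S, ← nsmul_one b, ← nsmul_one a]
  exact ⟨geom_sum_smul_eq_add_nsmul hab fixes_one hRS,
    geom_sum_smul_add_eq_nsmul hab fixes_one hRS⟩

end Trace

/-- With `a·k − b·(n−k) = 1` and `Tr_{n−k}(R) + Tr_k(S) = 1`, the element
`u := Σ_{α<a} R^{q^{αk}} + (Σ_{β<b} S^{q^{β(n−k)}})^q` satisfies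
`Tr_k(u) = R + b` and `Tr_{n−k}(u) = −S + a`. -/
theorem stmt_4 (p e q n k a b : ℕ) (hp : p.Prime) (he : 0 < e) (hq : q = p ^ e)
    (hn : 2 ≤ n) (hk1 : 1 ≤ k) (hkn : k < n) (hab : a * k = b * (n - k) + 1)
    (L : Type*) [Field L] [CharP L p]
    (R S : L) (hRS : Tr q (n - k) R + Tr q k S = 1)
    (u : L)
    (hu : u = (∑ α ∈ Finset.range a, R ^ q ^ (α * k))
              + (∑ β ∈ Finset.range b, S ^ q ^ (β * (n - k))) ^ q) :
    Tr q k u = R + (b : L) ∧ Tr q (n - k) u = -S + (a : L) := by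
  have : Fact p.Prime := ⟨hp⟩
  exact stmt_4_general (hq ▸ fun x y => add_pow_char_pow x y p e) hab hRS hu
end

section
/- Let M be a field of characteristic p, q a power of p, n ≥ 2 and 1 ≤ k < n. Let z, t ∈ M satisfy Tr_{n−k}(t)^{q^k} = z · Tr_k(t). Then w := Tr_k(t) satisfies Σ_{i=k}^{n−1} w^{q^i} = Σ_{i=0}^{k−1} z^{q^i} · w^{q^i}; that is, Tr_k(t) is a root of the polynomial (zf)^{ad}(T) = −(T^{q^{n−1}} + ⋯ + T^{q^k}) + z^{q^{k−1}} T^{q^{k−1}} + ⋯ + z^q T^q + z·T. -/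
/-!
Since `x ↦ x ^ q` is a ring endomorphism, trace polynomials commute with it, and hence with each
other. Writing `m = n - k` and `w = Tr_k(t)`, it remains to raise `Tr_m(w) = Tr_k(Tr_m(t))` to the
power `q ^ k`: on the right this gives `Tr_k(Tr_m(t) ^ q ^ k) = Tr_k(z * w)`.
-/

theorem map_tr {R S F : Type*} [CommRing R] [CommRing S] [FunLike F R S] [RingHomClass F R S]
    (φ : F) (q i : ℕ) (x : R) : φ (Tr q i x) = Tr q i (φ x) := by
  simp only [Tr, map_sum, map_pow]

section ExpChar

variable {R : Type*} [CommRing R] (p e : ℕ) [ExpChar R p]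

theorem tr_pow_pow_s8 (i j : ℕ) (x : R) :
    Tr (p ^ e) i x ^ (p ^ e) ^ j = Tr (p ^ e) i (x ^ (p ^ e) ^ j) := by
  simpa only [iterateFrobenius_def, pow_mul] using
    map_tr (iterateFrobenius R p (e * j)) (p ^ e) i x

theorem tr_tr_comm (i j : ℕ) (x : R) :
    Tr (p ^ e) i (Tr (p ^ e) j x) = Tr (p ^ e) j (Tr (p ^ e) i x) :=
  calc
    Tr (p ^ e) i (Tr (p ^ e) j x)
      = ∑ a ∈ Finset.range i, ∑ b ∈ Finset.range j, (x ^ (p ^ e) ^ a) ^ (p ^ e) ^ b :=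
        Finset.sum_congr rfl fun a _ ↦ tr_pow_pow_s8 p e j a x
    _ = ∑ b ∈ Finset.range j, Tr (p ^ e) i x ^ (p ^ e) ^ b := by
        rw [Finset.sum_comm]
        refine Finset.sum_congr rfl fun b _ ↦ ?_
        rw [tr_pow_pow_s8]
        exact Finset.sum_congr rfl fun a _ ↦ pow_right_comm x _ _

theorem sum_Ico_pow_pow_eq_tr_pow (k m : ℕ) (x : R) :
    ∑ i ∈ Finset.Ico k (k + m), x ^ (p ^ e) ^ i = Tr (p ^ e) m x ^ (p ^ e) ^ k := by
  rw [tr_pow_pow_s8, Finset.sum_Ico_eq_sum_range, Nat.add_sub_cancel_left]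
  simp only [Tr, pow_add, pow_mul]

theorem stmt_8_general (k m : ℕ) (z t : R)
    (ht : Tr (p ^ e) m t ^ (p ^ e) ^ k = z * Tr (p ^ e) k t) :
    ∑ i ∈ Finset.Ico k (k + m), Tr (p ^ e) k t ^ (p ^ e) ^ i
      = ∑ i ∈ Finset.range k, z ^ (p ^ e) ^ i * Tr (p ^ e) k t ^ (p ^ e) ^ i :=
  calc
    ∑ i ∈ Finset.Ico k (k + m), Tr (p ^ e) k t ^ (p ^ e) ^ i
      = Tr (p ^ e) m (Tr (p ^ e) k t) ^ (p ^ e) ^ k := sum_Ico_pow_pow_eq_tr_pow p e k m _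
    _ = Tr (p ^ e) k (Tr (p ^ e) m t) ^ (p ^ e) ^ k := by rw [tr_tr_comm]
    _ = Tr (p ^ e) k (Tr (p ^ e) m t ^ (p ^ e) ^ k) := tr_pow_pow_s8 p e k k _
    _ = Tr (p ^ e) k (z * Tr (p ^ e) k t) := by rw [ht]
    _ = ∑ i ∈ Finset.range k, z ^ (p ^ e) ^ i * Tr (p ^ e) k t ^ (p ^ e) ^ i :=
        Finset.sum_congr rfl fun i _ ↦ mul_pow z _ _

end ExpChar

/-- If `Tr_{n−k}(t)^{q^k} = z·Tr_k(t)`, then `w := Tr_k(t)` satisfies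
`Σ_{i=k}^{n−1} w^{q^i} = Σ_{i=0}^{k−1} z^{q^i}·w^{q^i}`, i.e. `Tr_k(t)` is a root of the
adjoint polynomial `(zf)^{ad}`. -/
theorem stmt_8 (p e q n k : ℕ) (hp : p.Prime) (he : 0 < e) (hq : q = p ^ e)
    (hn : 2 ≤ n) (hk1 : 1 ≤ k) (hkn : k < n)
    (M : Type*) [Field M] [CharP M p]
    (z t : M) (ht : (Tr q (n - k) t) ^ q ^ k = z * Tr q k t) :
    ∑ i ∈ Finset.Ico k n, (Tr q k t) ^ q ^ i
      = ∑ i ∈ Finset.range k, z ^ q ^ i * (Tr q k t) ^ q ^ i := by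
  have : ExpChar M p := .prime hp
  subst hq
  simpa only [Nat.add_sub_of_le hkn.le] using stmt_8_general p e k (n - k) z t ht
end

section
/- Let R be a commutative ring of characteristic p and q a power of the prime p. Let i, j be positive integers with gcd(i, j) = 1. If t ∈ R satisfies Tr_i(t) = 0 and Tr_j(t) = 0, then t = 0. -/
/-! If `y ↦ y ^ q` is additive, then `Tr q n t` is the `n`-th iterate of `y ↦ t + y ^ q` at `0`.
So `Tr q n t = 0` says that `0` is periodic with period `n` under this map. Periods are closed under
`gcd`, and period `1` forces `t = Tr q 1 t = 0`. -/

section AdditiveEndomorphism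

open Function Finset

variable {M : Type*} [AddCommMonoid M] (φ : M →+ M) (x : M)

theorem iterate_const_add_map_zero (n : ℕ) :
    (fun y ↦ x + φ y)^[n] 0 = ∑ k ∈ range n, φ^[k] x := by
  induction n with
  | zero => simp
  | succ n ih =>
    calc (fun y ↦ x + φ y)^[n + 1] 0
      _ = x + φ (∑ k ∈ range n, φ^[k] x) := by rw [iterate_succ_apply', ih]
      _ = x + ∑ k ∈ range n, φ^[k + 1] x := by simp only [map_sum, iterate_succ_apply']
      _ = ∑ k ∈ range (n + 1), φ^[k] x := by rw [sum_range_succ', add_comm, iterate_zero_apply]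

theorem isPeriodicPt_const_add_map_zero_iff (n : ℕ) :
    IsPeriodicPt (fun y ↦ x + φ y) n 0 ↔ ∑ k ∈ range n, φ^[k] x = 0 := by
  rw [IsPeriodicPt, IsFixedPt, iterate_const_add_map_zero]

variable {φ x} in
theorem sum_iterate_gcd_eq_zero {i j : ℕ} (hi : ∑ k ∈ range i, φ^[k] x = 0)
    (hj : ∑ k ∈ range j, φ^[k] x = 0) : ∑ k ∈ range (i.gcd j), φ^[k] x = 0 := by
  rw [← isPeriodicPt_const_add_map_zero_iff] at hi hj ⊢
  exact hi.gcd hj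

end AdditiveEndomorphism

section Trace

variable {R : Type*} [CommRing R] {q : ℕ}

theorem Tr_one_s9 (t : R) : Tr q 1 t = t := by
  simp [Tr]

theorem Tr_eq_sum_iterate (n : ℕ) (t : R) :
    Tr q n t = ∑ k ∈ Finset.range n, (fun y : R ↦ y ^ q)^[k] t := by
  simp only [Tr, pow_iterate]

theorem Tr_gcd_eq_zero (h_add : ∀ x y : R, (x + y) ^ q = x ^ q + y ^ q) {i j : ℕ} {t : R}
    (hti : Tr q i t = 0) (htj : Tr q j t = 0) : Tr q (i.gcd j) t = 0 := by
  rw [Tr_eq_sum_iterate] at hti htj ⊢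
  exact sum_iterate_gcd_eq_zero (φ := AddMonoidHom.mk' (· ^ q) h_add) hti htj

theorem stmt_9_general (h_add : ∀ x y : R, (x + y) ^ q = x ^ q + y ^ q) {i j : ℕ}
    (hij : i.Coprime j) {t : R} (hti : Tr q i t = 0) (htj : Tr q j t = 0) : t = 0 := by
  simpa only [hij.gcd_eq_one, Tr_one_s9] using Tr_gcd_eq_zero h_add hti htj

end Trace

/-- In a commutative ring of characteristic `p`, with `q` a power of `p`
and `gcd(i, j) = 1`, if `Tr_i(t) = 0` and `Tr_j(t) = 0` then `t = 0`. -/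
theorem stmt_9 (p e q : ℕ) (hp : p.Prime) (he : 0 < e) (hq : q = p ^ e)
    (R : Type*) [CommRing R] [CharP R p]
    (i j : ℕ) (hi : 0 < i) (hj : 0 < j) (hgcd : Nat.gcd i j = 1)
    (t : R) (hti : Tr q i t = 0) (htj : Tr q j t = 0) :
    t = 0 := by
  have : Fact p.Prime := ⟨hp⟩
  subst hq
  exact stmt_9_general (fun x y ↦ add_pow_char_pow x y p e) hgcd hti htj
end

section
/- Let q be a prime power, n ≥ 2, 1 ≤ k < n with gcd(k, n−k) = 1. Let K = F_{q^n}(z) be the rational function field over F_{q^n} and Ω an algebraic closure of K. Define g(T) = Tr_{n−k}(T)^{q^k} − z · Tr_k(T) and h(T) = −(T^{q^{n−1}} + ⋯ + T^{q^k}) + z^{q^{k−1}} T^{q^{k−1}} + ⋯ + z^q T^q + z·T, both in K[T]. Then the map t ↦ Tr_k(t) is a bijection from the set of roots of g in Ω onto the set of roots of h in Ω. -/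
/-!
Put `S k = 1 + X + ⋯ + X ^ (k - 1)` and let `φ` be the `q`-power Frobenius, an additive
endomorphism. Then `Tr_k = S k (φ)`, and the two root sets are `{t | Q(φ) t = z * P(φ) t}` and
`{w | Q(φ) w = P(φ) (z * w)}` for the integer polynomials `P = S k` and `Q = X ^ k * S (n - k)`.
The Euclidean algorithm on exponents shows that `P` and `Q` are coprime in `ℤ[X]`, and a Bézout
relation `A * P + B * Q = 1` makes `w ↦ A(φ) w + B(φ) (z * w)` inverse to `t ↦ P(φ) t`.
-/

section GeomSum

open Finset

variable {A : Type*} [CommRing A]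

theorem isCoprime_geom_sum_self (x : A) {k : ℕ} (hk : k ≠ 0) :
    IsCoprime (∑ i ∈ range k, x ^ i) x := by
  obtain ⟨j, rfl⟩ := Nat.exists_eq_succ_of_ne_zero hk
  exact ⟨1, -∑ i ∈ range j, x ^ i, by rw [geom_sum_succ]; ring⟩

theorem isCoprime_geom_sum_add_mul_iff (x : A) (a b c : ℕ) :
    IsCoprime (∑ i ∈ range a, x ^ i) (∑ i ∈ range (b + a * c), x ^ i) ↔
      IsCoprime (∑ i ∈ range a, x ^ i) (∑ i ∈ range b, x ^ i) := by
  induction c with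
  | zero => rfl
  | succ c ih =>
    rw [← ih, mul_add_one, ← add_assoc, sum_range_add]
    simp only [pow_add x (b + a * c), ← mul_sum]
    exact IsCoprime.add_mul_right_right_iff

theorem isCoprime_geom_sum_geom_sum (x : A) {a b : ℕ} (h : a.Coprime b) :
    IsCoprime (∑ i ∈ range a, x ^ i) (∑ i ∈ range b, x ^ i) := by
  induction a, b using Nat.gcd.induction with
  | H0 b =>
    obtain rfl : b = 1 := by simpa using h
    simpa using isCoprime_one_right
  | H1 a b _ ih =>
    rw [← Nat.mod_add_div b a, isCoprime_geom_sum_add_mul_iff]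
    exact (ih ((Nat.gcd_rec a b).symm.trans h)).symm

theorem isCoprime_geom_sum_pow_mul_geom_sum (x : A) {k m : ℕ} (h : k.Coprime m) :
    IsCoprime (∑ i ∈ range k, x ^ i) (x ^ k * ∑ i ∈ range m, x ^ i) := by
  refine IsCoprime.mul_right ?_ (isCoprime_geom_sum_geom_sum x h)
  obtain rfl | hk := eq_or_ne k 0
  · simpa using isCoprime_one_right
  · exact (isCoprime_geom_sum_self x hk).pow_right

end GeomSum

section Bezout

open Polynomial

theorem bijOn_smul_of_isCoprime {A M : Type*} [CommSemiring A] [AddCommMonoid M] [Module A M]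
    {a b : A} (hab : IsCoprime a b) (f : M → M) :
    Set.BijOn (a • ·) {x | b • x = f (a • x)} {y | b • y = a • f y} := by
  obtain ⟨u, v, huv⟩ := hab
  have bezout (x : M) : u • a • x + v • b • x = x := by
    rw [← mul_smul, ← mul_smul, ← add_smul, huv, one_smul]
  have smul_inverse {y : M} (hy : b • y = a • f y) : a • (u • y + v • f y) = y := by
    rw [smul_add, smul_comm a u, smul_comm a v, ← hy, bezout]
  refine Set.BijOn.mk ?mapsTo ?injOn ?surjOn
  case mapsTo =>
    intro x (hx : b • x = f (a • x))
    change b • a • x = a • f (a • x)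
    rw [smul_comm, hx]
  case injOn =>
    intro x (hx : b • x = f (a • x)) y (hy : b • y = f (a • y)) (hxy : a • x = a • y)
    rw [← bezout x, ← bezout y, hx, hy, hxy]
  case surjOn =>
    intro y (hy : b • y = a • f y)
    refine ⟨u • y + v • f y, ?_, smul_inverse hy⟩
    change b • (u • y + v • f y) = f (a • (u • y + v • f y))
    rw [smul_inverse hy, smul_add, smul_comm b u, smul_comm b v, hy, bezout]

theorem bijOn_aeval_of_isCoprime {A M : Type*} [CommSemiring A] [AddCommMonoid M] [Module A M]
    (φ : Module.End A M) {P Q : A[X]} (hPQ : IsCoprime P Q) (f : M → M) :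
    Set.BijOn (aeval φ P) {x | aeval φ Q x = f (aeval φ P x)} {y | aeval φ Q y = aeval φ P (f y)} :=
  bijOn_smul_of_isCoprime (M := Module.AEval' φ) hPQ f

end Bezout

section Frobenius

open Finset Polynomial

theorem Tr_mul {R : Type*} [CommRing R] (q k : ℕ) (z x : R) :
    Tr q k (z * x) = ∑ i ∈ range k, z ^ q ^ i * x ^ q ^ i := by
  simp only [Tr, mul_pow]

theorem expChar_of_card_eq_prime_pow_of_ringHom {F R : Type*} [Field F] [Fintype F] [CommRing R]
    [Nontrivial R] {p m : ℕ} (hp : p.Prime) (hF : Fintype.card F = p ^ m) (f : F →+* R) :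
    ExpChar R p := by
  have : Fact p.Prime := ⟨hp⟩
  have : CharP F p := charP_of_card_eq_prime_pow hF
  exact expChar_of_injective_ringHom f.injective p

variable {R : Type*} [CommRing R] (p e : ℕ) [ExpChar R p]

theorem Tr_pow_pow (k m : ℕ) (x : R) :
    Tr (p ^ e) m x ^ (p ^ e) ^ k = ∑ i ∈ Ico k (k + m), x ^ (p ^ e) ^ i := by
  rw [Tr, ← pow_mul p e k, sum_pow_char_pow, sum_Ico_eq_sum_range, Nat.add_sub_cancel_left]
  simp only [← pow_mul, pow_add, mul_comm]

variable (R) in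
/-- The Frobenius `x ↦ x ^ q`, where `q = p ^ e`, as a `ℤ`-linear endomorphism: through it `ℤ[X]`
acts on `R` by `q`-polynomials, with `X ^ i` sending `x` to `x ^ q ^ i`. -/
def frobeniusEnd : Module.End ℤ R :=
  (iterateFrobenius R p e).toAddMonoidHom.toIntLinearMap

theorem frobeniusEnd_pow_apply (i : ℕ) (x : R) :
    (frobeniusEnd R p e ^ i) x = x ^ (p ^ e) ^ i := by
  rw [Module.End.pow_apply]
  exact congrFun (pow_iterate (p ^ e) i) x

theorem coe_aeval_frobeniusEnd_geom_sum (k : ℕ) :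
    ⇑(aeval (frobeniusEnd R p e) (∑ i ∈ range k, X ^ i : ℤ[X])) = Tr (p ^ e) k := by
  ext x
  simp only [map_sum, aeval_X_pow, LinearMap.sum_apply, frobeniusEnd_pow_apply, Tr]

theorem aeval_frobeniusEnd_X_pow_mul (k : ℕ) (P : ℤ[X]) (x : R) :
    aeval (frobeniusEnd R p e) (X ^ k * P) x = aeval (frobeniusEnd R p e) P x ^ (p ^ e) ^ k := by
  rw [map_mul, aeval_X_pow, Module.End.mul_apply, frobeniusEnd_pow_apply]

theorem stmt_10_general {k m : ℕ} (hkm : k.Coprime m) (z : R) :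
    Set.BijOn (Tr (p ^ e) k)
      {t : R | Tr (p ^ e) m t ^ (p ^ e) ^ k = z * Tr (p ^ e) k t}
      {w : R | ∑ i ∈ Ico k (k + m), w ^ (p ^ e) ^ i
               = ∑ i ∈ range k, z ^ (p ^ e) ^ i * w ^ (p ^ e) ^ i} := by
  have aeval_bijOn := bijOn_aeval_of_isCoprime (frobeniusEnd R p e)
    (isCoprime_geom_sum_pow_mul_geom_sum X hkm) (z * ·)
  simpa only [aeval_frobeniusEnd_X_pow_mul, coe_aeval_frobeniusEnd_geom_sum, Tr_pow_pow p e k m,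
    Tr_mul] using aeval_bijOn

end Frobenius

/-- Over `K = F_{q^n}(z)` with algebraic closure `Ω`, the map
`t ↦ Tr_k(t)` is a bijection from the roots of `g(T) = Tr_{n−k}(T)^{q^k} − z·Tr_k(T)` in `Ω`
onto the roots of `h(T) = −(T^{q^{n−1}} + ⋯ + T^{q^k}) + z^{q^{k−1}}T^{q^{k−1}} + ⋯ + z·T`
in `Ω`. -/
theorem stmt_10 (p e q n k : ℕ) (hp : p.Prime) (he : 0 < e) (hq : q = p ^ e)
    (hn : 2 ≤ n) (hk1 : 1 ≤ k) (hkn : k < n) (hgcd : Nat.gcd k (n - k) = 1)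
    (F : Type*) [Field F] [Fintype F] (hF : Fintype.card F = q ^ n)
    (Ω : Type*) [Field Ω] [Algebra (RatFunc F) Ω] [IsAlgClosure (RatFunc F) Ω]
    (z : Ω) (hz : z = algebraMap (RatFunc F) Ω RatFunc.X) :
    Set.BijOn (fun t => Tr q k t)
      {t : Ω | (Tr q (n - k) t) ^ q ^ k = z * Tr q k t}
      {w : Ω | ∑ i ∈ Finset.Ico k n, w ^ q ^ i
               = ∑ i ∈ Finset.range k, z ^ q ^ i * w ^ q ^ i} := by
  have : ExpChar Ω p := expChar_of_card_eq_prime_pow_of_ringHom hp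
    (hF.trans (by rw [hq, ← pow_mul])) ((algebraMap (RatFunc F) Ω).comp (algebraMap F (RatFunc F)))
  simpa only [← hq, Nat.add_sub_cancel' hkn.le] using stmt_10_general p e hgcd z
end

section
/- Let q be a prime power, n ≥ 2, 1 ≤ k < n with gcd(k, n−k) = 1, and a, b nonnegative integers with a·k − b·(n−k) = 1. Let K = F_{q^n}(z) be the rational function field and Ω an algebraic closure of K. Let u ∈ Ω be a root of the polynomial Tr_{n−k}(T) − z·Tr_k(T)^{q^{n−k}} − a + b·z ∈ K[T], and let f(T) = −z^{−1}·Tr_{n−k}(T) + Tr_k(T)^{q^{n−k}} ∈ K[T]. Then the normal closure (Galois closure) of K(u)/K inside Ω equals the compositum of K(u) with the intermediate field generated over K by all roots of f in Ω. -/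
set_option synthInstance.maxHeartbeats 1000000

/-!
Write `m = n - k`. The polynomial `Tr_m(T) - z Tr_k(T)^{q^m} - a + b z` is linear in `z`, say
`A + z B`, so by Gauss's lemma it is irreducible over `F(z)` as soon as `A` and `B` are coprime in
`F[T]`. Now `A = Tr_m(T) - a` and `B = -(Tr_k(T) - b)^{q^m}`, while `Tr_m` and `Tr_k` commute, so
that `Tr_m(Tr_k(T) - b) - Tr_k(Tr_m(T) - a) = a k - b m = 1`, and this is a Bézout relation because
`x` divides `Tr_i(x)`.
Hence all roots of the polynomial are conjugate to `u`. By additivity they form the coset of `u`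
modulo the group of roots of `f`, and a subfield containing `u` contains this coset if and only if
it contains the group.
-/

open Polynomial IntermediateField

section Trace

variable {R : Type*} [CommRing R]

lemma map_Tr {S : Type*} [CommRing S] (φ : R →+* S) (q i : ℕ) (x : R) :
    φ (Tr q i x) = Tr q i (φ x) := by
  simp only [Tr, map_sum, map_pow]

lemma dvd_Tr {q : ℕ} (hq : q ≠ 0) (i : ℕ) (x : R) : x ∣ Tr q i x :=
  Finset.dvd_sum fun j _ ↦ dvd_pow_self x (pow_ne_zero j hq)

/-- The additive polynomial `Tr_m(x) - z·Tr_k(x)^{q^m}`, which is `-z` times the polynomial `f` of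
the main theorem. As for `Tr`, the polynomial itself is the value at `x = X`, with `z` replaced
by `C z`. -/
def twistedTr (q m k : ℕ) (z x : R) : R :=
  Tr q m x - z * Tr q k x ^ q ^ m

lemma map_twistedTr {S : Type*} [CommRing S] (φ : R →+* S) (q m k : ℕ) (z x : R) :
    φ (twistedTr q m k z x) = twistedTr q m k (φ z) (φ x) := by
  simp only [twistedTr, map_sub, map_mul, map_pow, map_Tr]

lemma twistedTr_eq_zero_iff {L : Type*} [Field L] {z : L} (hz : z ≠ 0) (q m k : ℕ) (x : L) :
    twistedTr q m k z x = 0 ↔ -z⁻¹ * Tr q m x + Tr q k x ^ q ^ m = 0 := by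
  have hf : -z⁻¹ * Tr q m x + Tr q k x ^ q ^ m = -z⁻¹ * twistedTr q m k z x := by
    rw [twistedTr]
    field_simp
    ring
  rw [hf, mul_eq_zero, or_iff_right (neg_ne_zero.2 (inv_ne_zero hz))]

variable {p : ℕ} [ExpChar R p]

lemma Tr_sub (e i : ℕ) (x y : R) :
    Tr (p ^ e) i (x - y) = Tr (p ^ e) i x - Tr (p ^ e) i y := by
  simp only [Tr, ← pow_mul, sub_pow_expChar_pow, Finset.sum_sub_distrib]

lemma natCast_pow_expChar_pow (c j : ℕ) : (c : R) ^ p ^ j = c := by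
  rw [← iterateFrobenius_def, map_natCast]

lemma Tr_natCast (e i c : ℕ) : Tr (p ^ e) i (c : R) = i * c := by
  simp [Tr, ← pow_mul, natCast_pow_expChar_pow]

lemma Tr_Tr_comm (e i j : ℕ) (x : R) :
    Tr (p ^ e) i (Tr (p ^ e) j x) = Tr (p ^ e) j (Tr (p ^ e) i x) := by
  simp only [Tr, ← pow_mul, sum_pow_char_pow]
  rw [Finset.sum_comm]
  simp only [mul_comm]

theorem isCoprime_Tr_sub_natCast {k m a b : ℕ} (hab : a * k = b * m + 1) (e : ℕ) (x : R) :
    IsCoprime (Tr (p ^ e) m x - a) (Tr (p ^ e) k x - b) := by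
  have hq : p ^ e ≠ 0 := pow_ne_zero e (expChar_pos R p).ne'
  obtain ⟨c, hc⟩ := dvd_Tr hq k (Tr (p ^ e) m x - a)
  obtain ⟨d, hd⟩ := dvd_Tr hq m (Tr (p ^ e) k x - b)
  have hab' : (a * k : R) = b * m + 1 := by simpa using congrArg (Nat.cast (R := R)) hab
  rw [Tr_sub, Tr_natCast] at hc hd
  refine ⟨-c, d, ?_⟩
  linear_combination hc - hd + Tr_Tr_comm (p := p) e m k x + hab'

lemma twistedTr_sub (e m k : ℕ) (z x y : R) :
    twistedTr (p ^ e) m k z (x - y) = twistedTr (p ^ e) m k z x - twistedTr (p ^ e) m k z y := by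
  simp only [twistedTr, Tr_sub, ← pow_mul, sub_pow_expChar_pow]
  ring

end Trace

section Irreducible

variable {R : Type*} [CommRing R] [IsDomain R]

lemma irreducible_map_C_add_C_X_mul_map_C {A B : R[X]} (hAB : IsRelPrime A B) (hB : B ≠ 0) :
    Irreducible (A.map C + C X * B.map C) := by
  have h : Irreducible (C B * X + C A) := irreducible_C_mul_X_add_C hB hAB.symm
  convert (MulEquiv.irreducible_iff (Bivariate.swap (R := R))).2 h using 1
  rw [map_add, map_mul, Bivariate.swap_C, Bivariate.swap_C, Bivariate.swap_Y]
  ring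

theorem irreducible_map_add_C_mul_map [UniqueFactorizationMonoid R] {K : Type*} [Field K]
    [Algebra R K] [Algebra R[X] K] [IsScalarTower R R[X] K] [IsFractionRing R[X] K] {A B : R[X]}
    (hAB : IsRelPrime A B)
    (hunit : ¬ IsUnit (A.map (algebraMap R K) + C (algebraMap R[X] K X) * B.map (algebraMap R K))) :
    Irreducible (A.map (algebraMap R K) + C (algebraMap R[X] K X) * B.map (algebraMap R K)) := by
  have hB : B ≠ 0 := by
    rintro rfl
    have hA : IsUnit A := isRelPrime_zero_right.1 hAB
    exact hunit (by simpa using hA.map (mapRingHom (algebraMap R K)))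
  have hmap : (A.map C + C X * B.map C).map (algebraMap R[X] K) =
      A.map (algebraMap R K) + C (algebraMap R[X] K X) * B.map (algebraMap R K) := by
    simp only [Polynomial.map_add, Polynomial.map_mul, Polynomial.map_map, map_C,
      IsScalarTower.algebraMap_eq R R[X] K, algebraMap_eq]
  have hirr := irreducible_map_C_add_C_X_mul_map_C hAB hB
  rw [← hmap] at hunit ⊢
  have hprim : (A.map C + C X * B.map C).IsPrimitive := hirr.isPrimitive fun hdeg ↦ hunit <| by
    obtain ⟨c, hc⟩ := natDegree_eq_zero.1 hdeg
    have hc0 : c ≠ 0 := C_ne_zero.1 (hc ▸ hirr.ne_zero)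
    rw [← hc, map_C, isUnit_C, isUnit_iff_ne_zero]
    exact (map_ne_zero_iff _ (IsFractionRing.injective R[X] K)).2 hc0
  exact hprim.irreducible_iff_irreducible_map_fraction_map.1 hirr

end Irreducible

section TracePoly

/-- The polynomial `Tr_m(T) - z·Tr_k(T)^{q^m} - a + b·z` over `F(z)`, of which `u` is a root. -/
noncomputable def tracePoly (F : Type*) [Field F] (q m k a b : ℕ) : (RatFunc F)[X] :=
  twistedTr q m k (C RatFunc.X) X - (a : (RatFunc F)[X]) +
    (b : (RatFunc F)[X]) * C RatFunc.X

variable {F : Type*} [Field F]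

lemma aeval_tracePoly {Ω : Type*} [Field Ω] [Algebra (RatFunc F) Ω] (q m k a b : ℕ) (t : Ω) :
    aeval t (tracePoly F q m k a b) =
      twistedTr q m k (algebraMap (RatFunc F) Ω RatFunc.X) t - a +
        b * algebraMap (RatFunc F) Ω RatFunc.X := by
  have htwisted := map_twistedTr (aeval t : (RatFunc F)[X] →ₐ[_] Ω).toRingHom q m k (C RatFunc.X) X
  simp only [AlgHom.toRingHom_eq_coe, RingHom.coe_coe, aeval_C, aeval_X] at htwisted
  simp only [tracePoly, map_add, map_sub, map_mul, map_natCast, aeval_C, htwisted]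

lemma rootSet_tracePoly {Ω : Type*} [Field Ω] [Algebra (RatFunc F) Ω] {p e m k a b : ℕ}
    [ExpChar Ω p] (hP : tracePoly F (p ^ e) m k a b ≠ 0) {u : Ω}
    (hu : aeval u (tracePoly F (p ^ e) m k a b) = 0) :
    (tracePoly F (p ^ e) m k a b).rootSet Ω =
      (· - u) ⁻¹' {t | twistedTr (p ^ e) m k (algebraMap (RatFunc F) Ω RatFunc.X) t = 0} := by
  ext t
  have haeval : aeval t (tracePoly F (p ^ e) m k a b) =
      twistedTr (p ^ e) m k (algebraMap (RatFunc F) Ω RatFunc.X) (t - u) := by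
    rw [aeval_tracePoly] at hu ⊢
    rw [twistedTr_sub]
    linear_combination hu
  rw [mem_rootSet_of_ne hP, haeval]
  rfl

theorem irreducible_tracePoly {p k m a b : ℕ} [ExpChar F p] (hab : a * k = b * m + 1) (e : ℕ)
    (hunit : ¬ IsUnit (tracePoly F (p ^ e) m k a b)) :
    Irreducible (tracePoly F (p ^ e) m k a b) := by
  have hAB : IsCoprime (Tr (p ^ e) m X - (a : F[X]))
      (-(Tr (p ^ e) k X - (b : F[X])) ^ (p ^ e) ^ m) :=
    (isCoprime_Tr_sub_natCast hab e X).pow_right.neg_right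
  have hmap_Tr (i : ℕ) :
      (Tr (p ^ e) i X : F[X]).map (algebraMap F (RatFunc F)) = Tr (p ^ e) i X := by
    rw [← coe_mapRingHom, map_Tr, coe_mapRingHom, map_X]
  have hdecomp : tracePoly F (p ^ e) m k a b =
      (Tr (p ^ e) m X - (a : F[X])).map (algebraMap F (RatFunc F)) +
        C (algebraMap F[X] (RatFunc F) X) *
          (-(Tr (p ^ e) k X - (b : F[X])) ^ (p ^ e) ^ m).map (algebraMap F (RatFunc F)) := by
    rw [← pow_mul, sub_pow_expChar_pow, natCast_pow_expChar_pow, pow_mul]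
    simp only [tracePoly, twistedTr, Polynomial.map_sub, Polynomial.map_neg, Polynomial.map_pow,
      Polynomial.map_natCast, hmap_Tr, RatFunc.algebraMap_X]
    ring
  rw [hdecomp] at hunit ⊢
  exact irreducible_map_add_C_mul_map hAB.isRelPrime hunit

end TracePoly

section NormalClosure

variable {K L : Type*} [Field K] [Field L] [Algebra K L]

theorem normalClosure_adjoin_simple_of_irreducible [Normal K L] {P : K[X]} (hP : Irreducible P)
    {u : L} (hu : aeval u P = 0) : normalClosure K K⟮u⟯ L = adjoin K (P.rootSet L) := by
  simp only [normalClosure_def', adjoin_map, Set.image_singleton]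
  apply le_antisymm
  · refine iSup_le fun σ ↦ adjoin_simple_le_iff.2 (subset_adjoin K _ ?_)
    rw [mem_rootSet_of_ne hP.ne_zero]
    simp [aeval_algHom_apply, hu]
  · rw [adjoin_le_iff]
    intro t ht
    have ht' : aeval t (minpoly K u) = 0 := by
      rw [← minpoly.eq_of_irreducible hP hu, map_mul, aeval_eq_zero_of_mem_rootSet ht, zero_mul]
    obtain ⟨σ, hσ⟩ := exists_algHom_of_splits_of_aeval
      (fun x : L ↦ normal_iff.1 inferInstance x) ht'
    exact le_iSup (fun σ : L →ₐ[K] L ↦ K⟮σ u⟯) σ (hσ ▸ mem_adjoin_simple_self K (σ u))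

lemma adjoin_preimage_sub_right {V : Set L} (hV : 0 ∈ V) (u : L) :
    adjoin K ((· - u) ⁻¹' V) = K⟮u⟯ ⊔ adjoin K V := by
  apply le_antisymm
  · rw [adjoin_le_iff]
    intro t ht
    rw [← add_sub_cancel u t]
    exact add_mem (le_sup_left (a := K⟮u⟯) (mem_adjoin_simple_self K u))
      (le_sup_right (b := adjoin K V) (subset_adjoin K V ht))
  · have hu : u ∈ adjoin K ((· - u) ⁻¹' V) := subset_adjoin K _ (by simpa using hV)
    refine sup_le (adjoin_simple_le_iff.2 hu) (adjoin_le_iff.2 fun v hv ↦ ?_)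
    rw [← add_sub_cancel_right v u]
    exact sub_mem (subset_adjoin K _ (by simpa using hv)) hu

end NormalClosure

theorem stmt_12_general (p e q m k a b : ℕ) (hq : q = p ^ e) (hab : a * k = b * m + 1)
    (F : Type*) [Field F] [ExpChar F p]
    (Ω : Type*) [Field Ω] [Algebra (RatFunc F) Ω] [Normal (RatFunc F) Ω]
    (z : Ω) (hz : z = algebraMap (RatFunc F) Ω RatFunc.X)
    (u : Ω) (hu : Tr q m u - z * (Tr q k u) ^ q ^ m - (a : Ω) + (b : Ω) * z = 0) :
    normalClosure (RatFunc F) (adjoin (RatFunc F) {u}) Ω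
      = adjoin (RatFunc F) {u}
        ⊔ adjoin (RatFunc F) {t : Ω | -z⁻¹ * Tr q m t + (Tr q k t) ^ q ^ m = 0} := by
  subst hq hz
  have : ExpChar Ω p :=
    expChar_of_injective_ringHom ((algebraMap (RatFunc F) Ω).comp (algebraMap F _)).injective p
  have hz : algebraMap (RatFunc F) Ω RatFunc.X ≠ 0 := by simp [RatFunc.X_ne_zero]
  have hPu : aeval u (tracePoly F (p ^ e) m k a b) = 0 := (aeval_tracePoly ..).trans hu
  have hP : Irreducible (tracePoly F (p ^ e) m k a b) :=
    irreducible_tracePoly hab e fun hunit ↦ not_isUnit_zero (hPu ▸ hunit.map (aeval u))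
  have hzero : twistedTr (p ^ e) m k (algebraMap (RatFunc F) Ω RatFunc.X) 0 = 0 := by
    simpa using twistedTr_sub e m k (algebraMap (RatFunc F) Ω RatFunc.X) u u
  rw [normalClosure_adjoin_simple_of_irreducible hP hPu, rootSet_tracePoly hP.ne_zero hPu,
    adjoin_preimage_sub_right (by simpa using hzero)]
  simp only [twistedTr_eq_zero_iff hz]

/-- Over `K = F_{q^n}(z)` with algebraic closure `Ω`, if `u ∈ Ω` is a root of
`Tr_{n−k}(T) − z·Tr_k(T)^{q^{n−k}} − a + b·z`, then the Galois (normal) closure of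
`K(u)/K` inside `Ω` equals the compositum of `K(u)` with the field generated over `K` by
all roots of `f(T) = −z^{−1}·Tr_{n−k}(T) + Tr_k(T)^{q^{n−k}}`. -/
theorem stmt_12 (p e q n k a b : ℕ) (hp : p.Prime) (he : 0 < e) (hq : q = p ^ e)
    (hn : 2 ≤ n) (hk1 : 1 ≤ k) (hkn : k < n) (hgcd : Nat.gcd k (n - k) = 1)
    (hab : a * k = b * (n - k) + 1)
    (F : Type*) [Field F] [Fintype F] (hF : Fintype.card F = q ^ n)
    (Ω : Type*) [Field Ω] [Algebra (RatFunc F) Ω] [IsAlgClosure (RatFunc F) Ω]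
    (z : Ω) (hz : z = algebraMap (RatFunc F) Ω RatFunc.X)
    (u : Ω) (hu : Tr q (n - k) u - z * (Tr q k u) ^ q ^ (n - k) - (a : Ω) + (b : Ω) * z = 0) :
    IntermediateField.normalClosure (RatFunc F) (IntermediateField.adjoin (RatFunc F) {u}) Ω
      = IntermediateField.adjoin (RatFunc F) {u}
        ⊔ IntermediateField.adjoin (RatFunc F)
            {t : Ω | -z⁻¹ * Tr q (n - k) t + (Tr q k t) ^ q ^ (n - k) = 0} := by
  have : Fact p.Prime := ⟨hp⟩
  have : CharP F p := charP_of_card_eq_prime_pow (f := e * n) (by rw [hF, hq, pow_mul])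
  have : Normal (RatFunc F) Ω := IsAlgClosure.normal _ _
  exact stmt_12_general p e q (n - k) k a b hq hab F Ω z hz u hu
end

section
/- Let L be a field of characteristic p, q a power of p, n ≥ 2, 1 ≤ k < n, and a, b nonnegative integers. Let u, s ∈ L with Tr_{n−k}(u) ≠ a and Tr_k(u) ≠ b, and suppose Tr_n(s) · (Tr_{n−k}(u) − a) = Tr_{n−k}(s) · (Tr_n(u) − (a + b)). Then: (i) ( Tr_k(s) / (Tr_k(u) − b) )^{q^{n−k}} = Tr_{n−k}(s) / (Tr_{n−k}(u) − a); and (ii) Tr_{n−k}(s)^{q^k} · (Tr_{n−k}(u) − a) = Tr_{n−k}(s) · (Tr_n(u) − (a + b)) − Tr_k(s) · (Tr_{n−k}(u) − a). -/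
/-!
The `q`-power map is an additive Frobenius iterate, so splitting the sum defining `Tr_n` after
either its first `n - k` or its first `k` terms gives
`Tr_n(x) = Tr_{n-k}(x) + Tr_k(x)^{q^{n-k}} = Tr_k(x) + Tr_{n-k}(x)^{q^k}`.
Substituting the first splitting for both `s` and `u` in the hypothesis, the products
`Tr_{n-k}(s) * (Tr_{n-k}(u) - a)` cancel and leave (i) with denominators cleared, since
`b^{q^{n-k}} = b`. Substituting the second one for `s` alone gives (ii).
-/

section CommSemiring

variable {R : Type*} [CommSemiring R] {p : ℕ} [ExpChar R p] (e : ℕ)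

theorem pow_pow_pow_eq_iterateFrobenius (i : ℕ) (x : R) :
    x ^ (p ^ e) ^ i = iterateFrobenius R p (e * i) x := by
  rw [iterateFrobenius_def, pow_mul]

theorem natCast_pow_pow_pow (i m : ℕ) : (m : R) ^ (p ^ e) ^ i = m := by
  rw [pow_pow_pow_eq_iterateFrobenius, map_natCast]

end CommSemiring

section CommRing

variable {R : Type*} [CommRing R] {p : ℕ} [ExpChar R p] (e : ℕ)

theorem Tr_pow_eq_sum (i j : ℕ) (x : R) :
    Tr (p ^ e) j x ^ (p ^ e) ^ i = ∑ l ∈ Finset.range j, x ^ (p ^ e) ^ (i + l) := by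
  rw [pow_pow_pow_eq_iterateFrobenius, Tr, map_sum]
  refine Finset.sum_congr rfl fun l _ => ?_
  rw [← pow_pow_pow_eq_iterateFrobenius, ← pow_mul, ← pow_add, add_comm]

theorem Tr_index_add (i j : ℕ) (x : R) :
    Tr (p ^ e) (i + j) x = Tr (p ^ e) i x + Tr (p ^ e) j x ^ (p ^ e) ^ i := by
  rw [Tr_pow_eq_sum, Tr, Tr, Finset.sum_range_add]

theorem Tr_index_add_sub_add (i j : ℕ) (x a : R) {b : R} (hb : b ^ (p ^ e) ^ i = b) :
    Tr (p ^ e) (i + j) x - (a + b) =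
      (Tr (p ^ e) i x - a) + (Tr (p ^ e) j x - b) ^ (p ^ e) ^ i := by
  have pow_sub_distrib : (Tr (p ^ e) j x - b) ^ (p ^ e) ^ i = Tr (p ^ e) j x ^ (p ^ e) ^ i - b := by
    rw [pow_pow_pow_eq_iterateFrobenius, map_sub, ← pow_pow_pow_eq_iterateFrobenius,
      ← pow_pow_pow_eq_iterateFrobenius, hb]
  rw [pow_sub_distrib, Tr_index_add]
  ring

end CommRing

theorem stmt_13_general {L : Type*} [Field L] {p e q n k : ℕ} [ExpChar L p] (hq : q = p ^ e)
    (hkn : k ≤ n) {a b u s : L} (hb : b ^ q ^ (n - k) = b)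
    (hua : Tr q (n - k) u ≠ a) (hub : Tr q k u ≠ b)
    (hs : Tr q n s * (Tr q (n - k) u - a) = Tr q (n - k) s * (Tr q n u - (a + b))) :
    (Tr q k s / (Tr q k u - b)) ^ q ^ (n - k) = Tr q (n - k) s / (Tr q (n - k) u - a) ∧
    Tr q (n - k) s ^ q ^ k * (Tr q (n - k) u - a) =
      Tr q (n - k) s * (Tr q n u - (a + b)) - Tr q k s * (Tr q (n - k) u - a) := by
  subst hq
  obtain ⟨m, rfl⟩ := Nat.exists_eq_add_of_le' hkn
  rw [Nat.add_sub_cancel] at hb hua hs ⊢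
  constructor
  · have cross_mul : Tr (p ^ e) k s ^ (p ^ e) ^ m * (Tr (p ^ e) m u - a) =
        Tr (p ^ e) m s * (Tr (p ^ e) k u - b) ^ (p ^ e) ^ m := by
      rw [Tr_index_add, Tr_index_add_sub_add e m k u a hb] at hs
      linear_combination hs
    rwa [div_pow, div_eq_div_iff (pow_ne_zero _ (sub_ne_zero.mpr hub)) (sub_ne_zero.mpr hua)]
  · rw [← hs, add_comm m k, Tr_index_add]
    ring

/-- If `Tr_{n−k}(u) ≠ a`, `Tr_k(u) ≠ b` and
`Tr_n(s)·(Tr_{n−k}(u) − a) = Tr_{n−k}(s)·(Tr_n(u) − (a+b))`, then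
`(Tr_k(s)/(Tr_k(u) − b))^{q^{n−k}} = Tr_{n−k}(s)/(Tr_{n−k}(u) − a)` and
`Tr_{n−k}(s)^{q^k}·(Tr_{n−k}(u) − a) = Tr_{n−k}(s)·(Tr_n(u) − (a+b)) − Tr_k(s)·(Tr_{n−k}(u) − a)`. -/
theorem stmt_13 (p e q n k a b : ℕ) (hp : p.Prime) (he : 0 < e) (hq : q = p ^ e)
    (hn : 2 ≤ n) (hk1 : 1 ≤ k) (hkn : k < n)
    (L : Type*) [Field L] [CharP L p]
    (u s : L) (hua : Tr q (n - k) u ≠ (a : L)) (hub : Tr q k u ≠ (b : L))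
    (hs : Tr q n s * (Tr q (n - k) u - (a : L))
          = Tr q (n - k) s * (Tr q n u - ((a : L) + (b : L)))) :
    (Tr q k s / (Tr q k u - (b : L))) ^ q ^ (n - k)
        = Tr q (n - k) s / (Tr q (n - k) u - (a : L)) ∧
    (Tr q (n - k) s) ^ q ^ k * (Tr q (n - k) u - (a : L))
        = Tr q (n - k) s * (Tr q n u - ((a : L) + (b : L)))
          - Tr q k s * (Tr q (n - k) u - (a : L)) := by
  have : ExpChar L p := .prime hp
  exact stmt_13_general hq hkn.le (hq ▸ natCast_pow_pow_pow e (n - k) b) hua hub hs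
end

section
/- (Shifting lemma) Let L be a field of characteristic p, q a power of p, n ≥ 2, 1 ≤ k < n, and a, b nonnegative integers. Let u, s ∈ L with Tr_{n−k}(u) ≠ a and Tr_k(u) ≠ b, and suppose Tr_n(s) · (Tr_{n−k}(u) − a) = Tr_{n−k}(s) · (Tr_n(u) − (a + b)). Define s' := ( Tr_k(s) / (Tr_k(u) − b) )^q − Tr_k(s) / (Tr_k(u) − b). Then Tr_{n−k}(u)^{q^k} ≠ a and Tr_n(s') · (Tr_{n−k}(u)^{q^k} − a) = Tr_{n−k}(s') · (Tr_n(u) − (a + b)). -/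
/-!
Put `m = n - k` and let `σ` be the Frobenius `x ↦ x ^ q`, so that `Tr_i` is the Birkhoff sum
`∑_{j < i} σ^j` and `Tr_n = Tr_m + σ^m ∘ Tr_k = Tr_k + σ^k ∘ Tr_m`. Write `A = Tr_m(u) - a`,
`B = Tr_k(u) - b` and `w = Tr_k(s) / B`. Since `σ` fixes `a` and `b`, the first decomposition turns
the relation assumed of `s` into `σ^m(w) = Tr_m(s) / A`. As `s' = σ(w) - w`, its traces telescope
to `Tr_m(s') = σ^m(w) - w` and `Tr_n(s') = σ^k(σ^m(w)) - w`, and the second decomposition then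
gives the relation for `s'`.
-/

section AdditiveEndomorphism

variable {F : Type*}

theorem birkhoffSum_id_add {M : Type*} [AddCommMonoid M] [FunLike F M M] [AddMonoidHomClass F M M]
    (f : F) (m k : ℕ) (x : M) :
    birkhoffSum f id (m + k) x = birkhoffSum f id m x + f^[m] (birkhoffSum f id k x) := by
  induction k with
  | zero => simp only [add_zero, birkhoffSum_zero, iterate_map_zero]
  | succ k ih =>
    rw [← add_assoc, birkhoffSum_succ, ih, birkhoffSum_succ, iterate_map_add, add_assoc, id, id,
      Function.iterate_add_apply]

theorem birkhoffSum_id_map_sub_self {G : Type*} [AddCommGroup G] [FunLike F G G]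
    [AddMonoidHomClass F G G] (f : F) (k : ℕ) (x : G) :
    birkhoffSum f id k (f x - x) = f^[k] x - x := calc
  birkhoffSum f id k (f x - x) = birkhoffSum f id k (f x) - birkhoffSum f id k x := by
    simp only [birkhoffSum, id, iterate_map_sub, Finset.sum_sub_distrib]
  _ = f^[k] x - x := birkhoffSum_apply_sub_birkhoffSum f id k x

end AdditiveEndomorphism

theorem iterate_iterateFrobenius_apply {R : Type*} [CommSemiring R] (p e i : ℕ) [ExpChar R p]
    (x : R) : (iterateFrobenius R p e)^[i] x = x ^ (p ^ e) ^ i := by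
  rw [← iterateFrobenius_mul_apply, iterateFrobenius_def, pow_mul]

theorem birkhoffSum_iterateFrobenius {R : Type*} [CommRing R] (p e i : ℕ) [ExpChar R p] (x : R) :
    birkhoffSum (iterateFrobenius R p e) id i x = Tr (p ^ e) i x := by
  simp only [birkhoffSum, Tr, id, iterate_iterateFrobenius_apply]

section FieldEndomorphism

variable {L : Type*} [Field L]

theorem map_div_eq_div_iff_add_mul_eq (τ : L →+* L) {x y A B : L} (hA : A ≠ 0) (hB : B ≠ 0) :
    τ (y / B) = x / A ↔ (x + τ y) * A = x * (A + τ B) := by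
  rw [map_div₀, div_eq_div_iff ((map_ne_zero τ).mpr hB) hA, add_mul, mul_add, add_right_inj]

theorem map_div_sub_div_mul_eq (ρ : L →+* L) {x y A B : L} (hA : A ≠ 0) (hB : B ≠ 0)
    (h : (y + ρ x) * A = x * (B + ρ A)) :
    (ρ (x / A) - y / B) * ρ A = (x / A - y / B) * (B + ρ A) := by
  have hρ : ρ (x / A) * ρ A = ρ x := by rw [← map_mul, div_mul_cancel₀ x hA]
  have hAC : x / A * (B + ρ A) = y + ρ x := by
    rw [div_mul_eq_mul_div, ← h, mul_div_cancel_right₀ _ hA]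
  have hyB : y / B * B = y := div_mul_cancel₀ y hB
  linear_combination hρ - hAC + hyB

theorem stmt_14_general (σ : L →+* L) {m k : ℕ} {a b u s : L} (ha : σ a = a) (hb : σ b = b)
    (hua : birkhoffSum σ id m u ≠ a) (hub : birkhoffSum σ id k u ≠ b)
    (hs : birkhoffSum σ id (m + k) s * (birkhoffSum σ id m u - a)
      = birkhoffSum σ id m s * (birkhoffSum σ id (m + k) u - (a + b)))
    {w s' : L} (hw : w = birkhoffSum σ id k s / (birkhoffSum σ id k u - b))
    (hs' : s' = σ w - w) :
    σ^[k] (birkhoffSum σ id m u) ≠ a ∧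
      birkhoffSum σ id (m + k) s' * (σ^[k] (birkhoffSum σ id m u) - a)
        = birkhoffSum σ id m s' * (birkhoffSum σ id (m + k) u - (a + b)) := by
  set A := birkhoffSum σ id m u - a with hA
  set B := birkhoffSum σ id k u - b with hB
  have hA0 : A ≠ 0 := sub_ne_zero.mpr hua
  have hB0 : B ≠ 0 := sub_ne_zero.mpr hub
  have map_A : (σ ^ k) A = σ^[k] (birkhoffSum σ id m u) - a := by
    rw [hA, map_sub, RingHom.coe_pow, Function.iterate_fixed ha]
  have map_B : (σ ^ m) B = σ^[m] (birkhoffSum σ id k u) - b := by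
    rw [hB, map_sub, RingHom.coe_pow, Function.iterate_fixed hb]
  have trace_u : birkhoffSum σ id (m + k) u - (a + b) = A + (σ ^ m) B := by
    rw [birkhoffSum_id_add, map_B, hA]
    ring
  have trace_u' : birkhoffSum σ id (m + k) u - (a + b) = B + (σ ^ k) A := by
    rw [add_comm m, birkhoffSum_id_add, map_A, hB]
    ring
  have map_w : σ^[m] w = birkhoffSum σ id m s / A := by
    rw [trace_u, birkhoffSum_id_add, ← RingHom.coe_pow] at hs
    rw [hw, ← RingHom.coe_pow, map_div_eq_div_iff_add_mul_eq _ hA0 hB0, hs]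
  rw [← sub_ne_zero, ← map_A]
  refine ⟨(map_ne_zero _).mpr hA0, ?_⟩
  rw [trace_u', add_comm m, birkhoffSum_id_add] at hs
  rw [hs', birkhoffSum_id_map_sub_self, birkhoffSum_id_map_sub_self, trace_u', add_comm m,
    Function.iterate_add_apply, map_w, hw]
  exact map_div_sub_div_mul_eq (σ ^ k) hA0 hB0 hs

end FieldEndomorphism

/-- Shifting lemma: If `Tr_{n−k}(u) ≠ a`, `Tr_k(u) ≠ b` and
`Tr_n(s)·(Tr_{n−k}(u) − a) = Tr_{n−k}(s)·(Tr_n(u) − (a+b))`, then for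
`s' := (Tr_k(s)/(Tr_k(u) − b))^q − Tr_k(s)/(Tr_k(u) − b)` one has
`Tr_{n−k}(u)^{q^k} ≠ a` and `Tr_n(s')·(Tr_{n−k}(u)^{q^k} − a) = Tr_{n−k}(s')·(Tr_n(u) − (a+b))`. -/
theorem stmt_14 (p e q n k a b : ℕ) (hp : p.Prime) (he : 0 < e) (hq : q = p ^ e)
    (hn : 2 ≤ n) (hk1 : 1 ≤ k) (hkn : k < n)
    (L : Type*) [Field L] [CharP L p]
    (u s : L) (hua : Tr q (n - k) u ≠ (a : L)) (hub : Tr q k u ≠ (b : L))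
    (hs : Tr q n s * (Tr q (n - k) u - (a : L))
          = Tr q (n - k) s * (Tr q n u - ((a : L) + (b : L))))
    (s' : L)
    (hs' : s' = (Tr q k s / (Tr q k u - (b : L))) ^ q - Tr q k s / (Tr q k u - (b : L))) :
    (Tr q (n - k) u) ^ q ^ k ≠ (a : L) ∧
    Tr q n s' * ((Tr q (n - k) u) ^ q ^ k - (a : L))
      = Tr q (n - k) s' * (Tr q n u - ((a : L) + (b : L))) := by
  have : Fact p.Prime := ⟨hp⟩
  obtain ⟨m, rfl⟩ := Nat.exists_eq_add_of_le' hkn.le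
  subst hq
  simp only [Nat.add_sub_cancel, ← birkhoffSum_iterateFrobenius, ← iterate_iterateFrobenius_apply]
    at hua hub hs hs' ⊢
  exact stmt_14_general (iterateFrobenius L p e) (map_natCast _ a) (map_natCast _ b) hua hub hs
    rfl hs'
end

section
/- Let q be a prime power, n ≥ 2 and 1 ≤ k < n. Let K = F_{q^n}(z) be the rational function field and f(T) = −z^{−1}·Tr_{n−k}(T) + Tr_k(T)^{q^{n−k}} ∈ K[T]. Let M be the splitting field of f over K. Then M/K is a Galois extension and there exists an injective group homomorphism from Gal(M/K) into GL_{n−1}(F_q), the group of invertible (n−1)×(n−1) matrices over F_q. -/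
set_option synthInstance.maxHeartbeats 1000000

/-!
Both traces are sums of powers `T ^ q ^ j`, so `f` is a linearized polynomial
`∑_{j < n} a_j T ^ q ^ j`, with `a_j = -z⁻¹` for `j < n - k` and `a_j = 1` for `n - k ≤ j < n`.
Such a polynomial has constant derivative `a₀ ≠ 0`, hence is separable, and its evaluation is
`F_q`-linear. So its `q ^ (n - 1)` roots form an `F_q`-vector space of dimension `n - 1`, which
generates the splitting field and on which the Galois group therefore acts faithfully and linearly.
-/

open Polynomial

section GaloisRepresentation

lemma exists_injective_hom_generalLinearGroup {k G V : Type*} [Field k] [Group G]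
    [AddCommGroup V] [Module k V] [FiniteDimensional k V] {d : ℕ} (hd : Module.finrank k V = d)
    (ρ : Representation k G V) (hρ : Function.Injective ρ) :
    ∃ φ : G →* Matrix.GeneralLinearGroup (Fin d) k, Function.Injective φ := by
  let b := Module.finBasisOfFinrankEq k V hd
  refine ⟨((LinearMap.toMatrixAlgEquiv b : Module.End k V →* _).comp ρ).toHomUnits, ?_⟩
  intro σ τ h
  exact hρ ((LinearMap.toMatrixAlgEquiv b).injective (congrArg Units.val h))

variable {k K M : Type*} [Field k] [Field K] [Field M] [Algebra k K] [Algebra K M] [Algebra k M]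
  [IsScalarTower k K M]

/-- The action of `Gal(M/K)`, linear over a subfield `k` of `K`, on the roots in `M` of a
polynomial `f` over `K`, when these roots form a `k`-subspace `V` of `M`. -/
def rootSubrepresentation (f : K[X]) (V : Submodule k M) (hV : (V : Set M) = f.rootSet M) :
    Subrepresentation (Representation.ofDistribMulAction k Gal(M/K) M) where
  toSubmodule := V
  apply_mem_toSubmodule σ x hx := by
    rw [← SetLike.mem_coe, hV] at hx ⊢
    exact rootSet_mapsTo σ.toAlgHom hx

lemma rootSubrepresentation_injective (f : K[X]) [f.IsSplittingField K M] (V : Submodule k M)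
    (hV : (V : Set M) = f.rootSet M) :
    Function.Injective (rootSubrepresentation f V hV).toRepresentation := by
  intro σ τ hστ
  have eqOn_roots : Set.EqOn σ.toAlgHom τ.toAlgHom (f.rootSet M) := by
    intro x hx
    rw [← hV] at hx
    exact congrArg Subtype.val (LinearMap.congr_fun hστ ⟨x, hx⟩)
  exact AlgEquiv.coe_toAlgHom_injective
    (AlgHom.ext_of_adjoin_eq_top (IsSplittingField.adjoin_rootSet M f) eqOn_roots)

end GaloisRepresentation

section LinearizedPolynomial

/-- The linearized polynomial (or `q`-polynomial) `∑_{j < n} a_j X ^ q ^ j`. Its coefficients are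
given by a sequence, of which only the first `n` terms matter. -/
noncomputable def linearizedPolynomial {R : Type*} [Semiring R] (q n : ℕ) (a : ℕ → R) : R[X] :=
  ∑ j ∈ Finset.range n, C (a j) * X ^ q ^ j

lemma natDegree_linearizedPolynomial {R : Type*} [Semiring R] {q : ℕ} (hq : 1 < q) {d : ℕ}
    {a : ℕ → R} (had : a d ≠ 0) : (linearizedPolynomial q (d + 1) a).natDegree = q ^ d := by
  have degree_lower_terms_lt : (∑ j ∈ Finset.range d, C (a j) * X ^ q ^ j).degree
      < (C (a d) * X ^ q ^ d).degree := by
    rw [degree_C_mul_X_pow _ had]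
    refine (degree_sum_le _ _).trans_lt ((Finset.sup_lt_iff (WithBot.bot_lt_coe _)).2 ?_)
    intro j hj
    refine (degree_C_mul_X_pow_le _ _).trans_lt ?_
    exact_mod_cast Nat.pow_lt_pow_right hq (Finset.mem_range.1 hj)
  rw [linearizedPolynomial, Finset.sum_range_succ,
    natDegree_add_eq_right_of_degree_lt degree_lower_terms_lt, natDegree_C_mul_X_pow _ _ had]

lemma derivative_linearizedPolynomial {R : Type*} [Semiring R] {q : ℕ} (hq : (q : R) = 0) (d : ℕ)
    (a : ℕ → R) : (linearizedPolynomial q (d + 1) a).derivative = C (a 0) := by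
  simp [linearizedPolynomial, Finset.sum_range_succ', derivative_X_pow, hq]

lemma separable_linearizedPolynomial {R : Type*} [CommRing R] {q : ℕ} (hq : (q : R) = 0) (d : ℕ)
    {a : ℕ → R} (ha0 : IsUnit (a 0)) : (linearizedPolynomial q (d + 1) a).Separable := by
  rw [separable_def, derivative_linearizedPolynomial hq]
  exact isCoprime_one_right.of_isCoprime_of_dvd_right (isUnit_C.2 ha0).dvd

variable (k : Type*) [Field k] [Fintype k]

lemma natCast_card_eq_zero (R : Type*) [Ring R] [Algebra k R] : (Fintype.card k : R) = 0 := by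
  rw [← map_natCast (algebraMap k R), FiniteField.cast_card_eq_zero, map_zero]

lemma frobeniusAlgHom_pow_apply {R : Type*} [CommRing R] [Algebra k R] (m : ℕ) (x : R) :
    (FiniteField.frobeniusAlgHom k R ^ m) x = x ^ Fintype.card k ^ m := by
  rw [AlgHom.coe_pow, FiniteField.coe_frobeniusAlgHom, pow_iterate]

lemma neg_C_mul_trace_add_trace_pow_eq_linearizedPolynomial {R : Type*} [CommRing R] [Algebra k R]
    (c : R) (m l : ℕ) :
    -(C c) * (∑ j ∈ Finset.range m, X ^ Fintype.card k ^ j)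
        + (∑ j ∈ Finset.range l, X ^ Fintype.card k ^ j) ^ Fintype.card k ^ m
      = linearizedPolynomial (Fintype.card k) (m + l) (fun j ↦ if j < m then -c else 1) := by
  have trace_pow : (∑ j ∈ Finset.range l, (X : R[X]) ^ Fintype.card k ^ j) ^ Fintype.card k ^ m
      = ∑ j ∈ Finset.range l, X ^ Fintype.card k ^ (m + j) := by
    rw [← frobeniusAlgHom_pow_apply, map_sum]
    simp only [frobeniusAlgHom_pow_apply, ← pow_mul, ← pow_add, add_comm m]
  rw [trace_pow, linearizedPolynomial, Finset.sum_range_add, Finset.mul_sum]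
  congr 1
  · refine Finset.sum_congr rfl fun j hj ↦ ?_
    rw [if_pos (Finset.mem_range.1 hj), C_neg]
  · simp

variable {K : Type*} (M : Type*) [Field K] [Field M] [Algebra K M] [Algebra k M]

/-- Evaluation on `M` of the linearized polynomial with coefficients `a` and exponents the powers
of the cardinality of `k`, as a `k`-linear map. -/
noncomputable def linearizedEval [SMulCommClass k K M] (n : ℕ) (a : ℕ → K) : M →ₗ[k] M :=
  ∑ j ∈ Finset.range n, a j • (FiniteField.frobeniusAlgHom k M ^ j).toLinearMap

lemma linearizedEval_apply [SMulCommClass k K M] (n : ℕ) (a : ℕ → K) (x : M) :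
    linearizedEval k M n a x = aeval x (linearizedPolynomial (Fintype.card k) n a) := by
  simp [linearizedEval, linearizedPolynomial, frobeniusAlgHom_pow_apply, -AlgHom.coe_pow,
    Algebra.smul_def]

lemma coe_ker_linearizedEval [SMulCommClass k K M] {n : ℕ} {a : ℕ → K}
    (hf : linearizedPolynomial (Fintype.card k) n a ≠ 0) :
    (LinearMap.ker (linearizedEval k M n a) : Set M)
      = (linearizedPolynomial (Fintype.card k) n a).rootSet M := by
  ext x
  rw [SetLike.mem_coe, LinearMap.mem_ker, linearizedEval_apply, mem_rootSet_of_ne hf]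

lemma finite_ker_linearizedEval [SMulCommClass k K M] {n : ℕ} {a : ℕ → K}
    (hf : linearizedPolynomial (Fintype.card k) n a ≠ 0) :
    Finite (LinearMap.ker (linearizedEval k M n a)) :=
  (Equiv.setCongr (coe_ker_linearizedEval k M hf)).finite_iff.2 inferInstance

variable [Algebra k K] [IsScalarTower k K M]

lemma finrank_ker_linearizedEval {d : ℕ} {a : ℕ → K} (ha0 : a 0 ≠ 0) (had : a d ≠ 0)
    (hsplits : ((linearizedPolynomial (Fintype.card k) (d + 1) a).map (algebraMap K M)).Splits) :
    Module.finrank k (LinearMap.ker (linearizedEval k M (d + 1) a)) = d := by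
  set f := linearizedPolynomial (Fintype.card k) (d + 1) a
  have hsep : f.Separable := separable_linearizedPolynomial (natCast_card_eq_zero k K) d ha0.isUnit
  have card_ker : Nat.card (LinearMap.ker (linearizedEval k M (d + 1) a))
      = Fintype.card k ^ d := by
    rw [← natDegree_linearizedPolynomial Fintype.one_lt_card had,
      ← card_rootSet_eq_natDegree hsep hsplits, ← Nat.card_eq_fintype_card]
    exact Nat.card_congr (Equiv.setCongr (coe_ker_linearizedEval k M hsep.ne_zero))
  have := finite_ker_linearizedEval k M hsep.ne_zero
  rw [Module.natCard_eq_pow_finrank (K := k), Nat.card_eq_fintype_card] at card_ker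
  exact Nat.pow_right_injective Fintype.one_lt_card card_ker

theorem exists_injective_gal_hom_of_linearizedPolynomial {d : ℕ} {a : ℕ → K} (ha0 : a 0 ≠ 0)
    (had : a d ≠ 0) [(linearizedPolynomial (Fintype.card k) (d + 1) a).IsSplittingField K M] :
    ∃ φ : Gal(M/K) →* Matrix.GeneralLinearGroup (Fin d) k, Function.Injective φ := by
  set f := linearizedPolynomial (Fintype.card k) (d + 1) a
  have hsep : f.Separable := separable_linearizedPolynomial (natCast_card_eq_zero k K) d ha0.isUnit
  have := finite_ker_linearizedEval k M hsep.ne_zero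
  exact exists_injective_hom_generalLinearGroup
    (finrank_ker_linearizedEval k M ha0 had (IsSplittingField.splits M f)) _
    (rootSubrepresentation_injective f _ (coe_ker_linearizedEval k M hsep.ne_zero))

end LinearizedPolynomial

lemma nonempty_ringHom_of_card_eq_pow {k F : Type*} [Field k] [Fintype k] [Field F] [Fintype F]
    {n : ℕ} (h : Fintype.card F = Fintype.card k ^ n) : Nonempty (k →+* F) := by
  have : NeZero n := ⟨by rintro rfl; exact Fintype.one_lt_card.ne' (h.trans (pow_zero _))⟩
  obtain ⟨p, _⟩ := CharP.exists k
  have : Fact p.Prime := ⟨CharP.char_is_prime k p⟩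
  let _ := Fintype.ofFinite (FiniteField.Extension k p n)
  have card_extension : Fintype.card (FiniteField.Extension k p n) = Fintype.card F := by
    rw [← Nat.card_eq_fintype_card, FiniteField.natCard_extension, Nat.card_eq_fintype_card, h]
  exact ⟨(FiniteField.ringEquivOfCardEq card_extension : _ ≃+* F).toRingHom.comp (algebraMap k _)⟩

theorem stmt_16_general {Fq K M : Type*} [Field Fq] [Fintype Fq] [Field K] [Algebra Fq K]
    [Field M] [Algebra K M] [Algebra Fq M] [IsScalarTower Fq K M] {q n k : ℕ}
    (hFq : Fintype.card Fq = q) (hn : 0 < n) (hkn : k ≤ n) {c : K} (hc : c ≠ 0) (f : K[X])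
    (hf : f = -(C c) * (∑ j ∈ Finset.range (n - k), X ^ q ^ j)
              + (∑ j ∈ Finset.range k, X ^ q ^ j) ^ q ^ (n - k))
    [f.IsSplittingField K M] :
    IsGalois K M ∧
    ∃ φ : Gal(M/K) →* Matrix.GeneralLinearGroup (Fin (n - 1)) Fq, Function.Injective φ := by
  subst hFq
  let a : ℕ → K := fun j ↦ if j < n - k then -c else 1
  have ha : ∀ j, a j ≠ 0 := by
    intro j
    by_cases hj : j < n - k <;> simp [a, hj, hc]
  have hfa : f = linearizedPolynomial (Fintype.card Fq) (n - 1 + 1) a := by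
    rw [hf, neg_C_mul_trace_add_trace_pow_eq_linearizedPolynomial Fq, Nat.sub_add_cancel hkn,
      Nat.sub_add_cancel hn]
  subst hfa
  have hsep := separable_linearizedPolynomial (natCast_card_eq_zero Fq K) (n - 1) (ha 0).isUnit
  exact ⟨.of_separable_splitting_field hsep,
    exists_injective_gal_hom_of_linearizedPolynomial Fq M (ha 0) (ha (n - 1))⟩

/-- Let `K = F_{q^n}(z)` and
`f(T) = −z^{−1}·Tr_{n−k}(T) + Tr_k(T)^{q^{n−k}} ∈ K[T]`, and let `M` be the splitting
field of `f` over `K`. Then `M/K` is Galois and `Gal(M/K)` embeds into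
`GL_{n−1}(F_q)`. -/
theorem stmt_16 (p e q n k : ℕ) (hp : p.Prime) (he : 0 < e) (hq : q = p ^ e)
    (hn : 2 ≤ n) (hk1 : 1 ≤ k) (hkn : k < n)
    (Fq : Type*) [Field Fq] [Fintype Fq] (hFq : Fintype.card Fq = q)
    (F : Type*) [Field F] [Fintype F] (hF : Fintype.card F = q ^ n)
    (f : Polynomial (RatFunc F))
    (hf : f = -(Polynomial.C (RatFunc.X : RatFunc F)⁻¹)
                * (∑ j ∈ Finset.range (n - k), Polynomial.X ^ q ^ j)
              + (∑ j ∈ Finset.range k, Polynomial.X ^ q ^ j) ^ q ^ (n - k)) :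
    IsGalois (RatFunc F) f.SplittingField ∧
    ∃ φ : (f.SplittingField ≃ₐ[RatFunc F] f.SplittingField)
            →* Matrix.GeneralLinearGroup (Fin (n - 1)) Fq,
      Function.Injective φ := by
  subst hFq
  obtain ⟨i⟩ := nonempty_ringHom_of_card_eq_pow hF
  let _ : Algebra Fq F := i.toAlgebra
  exact stmt_16_general rfl (by omega) hkn.le (inv_ne_zero RatFunc.X_ne_zero) f hf
end

section
/- Let q be a prime power, n ≥ 2 and 1 ≤ k < n. Let K = F_{q^n}(z) be the rational function field and Ω an algebraic closure of K. Then the polynomial g(T) = Tr_{n−k}(T)^{q^k} − z·Tr_k(T) ∈ K[T] is separable of degree q^{n−1}, and its set of roots in Ω is an F_q-subspace of Ω: it contains 0, is closed under addition and under multiplication by scalars from F_q, and has exactly q^{n−1} elements. -/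
/-!
In characteristic `p` and for `q` a power of `p`, both `Tr_{n-k}(T) ^ q ^ k` and `z * Tr_k(T)` are
combinations of the monomials `T ^ q ^ j`, so `g` acts `F_q`-linearly and its roots form an
`F_q`-subspace. The derivative of `g` is the nonzero constant `-z`, so `g` is separable and has as
many roots as its degree, which is that of the dominant term `Tr_{n-k}(T) ^ q ^ k`.
-/

open Polynomial

section LinearizedPolynomials

/-- The `q`-linearized polynomials (`q`-polynomials): the `R`-linear combinations of the monomials
`X ^ q ^ j`. When `q` is a power of the characteristic, evaluating them is `F_q`-linear. -/
noncomputable def linearizedPolynomials (R : Type*) [CommSemiring R] (q : ℕ) : Submodule R R[X] :=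
  Submodule.span R (Set.range fun j : ℕ => X ^ q ^ j)

namespace linearizedPolynomials

variable {R A : Type*} [CommSemiring R] [CommSemiring A] [Algebra R A]

theorem X_pow_mem (q j : ℕ) : (X ^ q ^ j : R[X]) ∈ linearizedPolynomials R q :=
  Submodule.subset_span ⟨j, rfl⟩

theorem pow_mem (p e k : ℕ) [ExpChar R p] {f : R[X]}
    (hf : f ∈ linearizedPolynomials R (p ^ e)) :
    f ^ (p ^ e) ^ k ∈ linearizedPolynomials R (p ^ e) := by
  induction hf using Submodule.span_induction with
  | mem _ hx =>
    obtain ⟨j, rfl⟩ := hx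
    change (X ^ (p ^ e) ^ j) ^ (p ^ e) ^ k ∈ _
    rw [← pow_mul, ← pow_add]
    exact X_pow_mem (p ^ e) (j + k)
  | zero =>
    rw [zero_pow (pow_ne_zero _ (pow_ne_zero _ (expChar_ne_zero R p)))]
    exact Submodule.zero_mem _
  | add f g _ _ hf hg =>
    rw [← pow_mul] at hf hg ⊢
    rw [add_pow_expChar_pow]
    exact Submodule.add_mem _ hf hg
  | smul a f _ hf =>
    rw [_root_.smul_pow]
    exact Submodule.smul_mem _ _ hf

theorem aeval_add (p e : ℕ) [ExpChar A p] {f : R[X]}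
    (hf : f ∈ linearizedPolynomials R (p ^ e)) (s t : A) :
    aeval (s + t) f = aeval s f + aeval t f := by
  induction hf using Submodule.span_induction with
  | mem _ hx =>
    obtain ⟨j, rfl⟩ := hx
    simp only [map_pow, aeval_X, ← pow_mul, add_pow_expChar_pow]
  | zero => simp only [map_zero, add_zero]
  | add f g _ _ hf hg => rw [map_add, map_add, map_add, hf, hg, add_add_add_comm]
  | smul a f _ hf => simp only [map_smul, hf, smul_add]

theorem aeval_mul {q : ℕ} {f : R[X]} (hf : f ∈ linearizedPolynomials R q)
    {c : A} (hc : c ^ q = c) (t : A) :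
    aeval (c * t) f = c * aeval t f := by
  induction hf using Submodule.span_induction with
  | mem _ hx =>
    obtain ⟨j, rfl⟩ := hx
    have hcj : c ^ q ^ j = c := by
      simpa only [pow_iterate, Function.IsFixedPt] using
        Function.IsFixedPt.iterate (f := (· ^ q)) hc j
    simp only [map_pow, aeval_X, mul_pow, hcj]
  | zero => simp only [map_zero, mul_zero]
  | add f g _ _ hf hg => rw [map_add, map_add, hf, hg, mul_add]
  | smul a f _ hf => simp only [map_smul, hf, mul_smul_comm]

theorem aeval_zero {q : ℕ} (hq : q ≠ 0) {f : R[X]} (hf : f ∈ linearizedPolynomials R q) :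
    aeval (0 : A) f = 0 := by
  simpa only [zero_mul] using aeval_mul hf (zero_pow hq) (0 : A)

end linearizedPolynomials

end LinearizedPolynomials

section TracePolynomial

/-- The trace polynomial `Tr_i(X) = X + X ^ q + ⋯ + X ^ q ^ (i - 1)`, with `Tr_0 = 0`. -/
noncomputable def tracePolynomial (R : Type*) [Semiring R] (q i : ℕ) : R[X] :=
  ∑ j ∈ Finset.range i, X ^ q ^ j

namespace tracePolynomial

theorem mem_linearizedPolynomials (R : Type*) [CommSemiring R] (q i : ℕ) :
    tracePolynomial R q i ∈ linearizedPolynomials R q :=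
  Submodule.sum_mem _ fun j _ => linearizedPolynomials.X_pow_mem q j

theorem natDegree_succ (R : Type*) [Semiring R] [Nontrivial R] {q : ℕ} (hq : 1 < q) (i : ℕ) :
    (tracePolynomial R q (i + 1)).natDegree = q ^ i := by
  induction i with
  | zero => simp [tracePolynomial]
  | succ i ih =>
    have hlt : (tracePolynomial R q (i + 1)).natDegree < (X ^ q ^ (i + 1) : R[X]).natDegree := by
      rw [ih, natDegree_X_pow]
      exact Nat.pow_lt_pow_right hq i.lt_succ_self
    rw [tracePolynomial, Finset.sum_range_succ, ← tracePolynomial,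
      natDegree_add_eq_right_of_natDegree_lt hlt, natDegree_X_pow]

theorem derivative_succ {R : Type*} [CommSemiring R] {q : ℕ} (hq : (q : R) = 0) (i : ℕ) :
    derivative (tracePolynomial R q (i + 1)) = 1 := by
  have hpow (j : ℕ) : derivative (X ^ q ^ (j + 1) : R[X]) = 0 := by
    rw [derivative_X_pow, Nat.cast_pow, hq, zero_pow j.succ_ne_zero, C_0, zero_mul]
  rw [tracePolynomial, Finset.sum_range_succ', derivative_add, derivative_sum]
  simp only [hpow, Finset.sum_const_zero, zero_add, pow_zero, pow_one, derivative_X]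

end tracePolynomial

end TracePolynomial

section TraceDifference

/-- The polynomial `Tr_m(T) ^ q ^ k - z * Tr_k(T)`; the paper's `g` is the case `m = n - k`. -/
noncomputable def traceDifference {R : Type*} [Ring R] (q m k : ℕ) (z : R) : R[X] :=
  tracePolynomial R q m ^ q ^ k - C z * tracePolynomial R q k

namespace traceDifference

theorem mem_linearizedPolynomials {R : Type*} [CommRing R] (p e m k : ℕ) [ExpChar R p] (z : R) :
    traceDifference (p ^ e) m k z ∈ linearizedPolynomials R (p ^ e) := by
  have hTr := tracePolynomial.mem_linearizedPolynomials R (p ^ e)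
  rw [traceDifference, C_mul']
  exact Submodule.sub_mem _ (linearizedPolynomials.pow_mem p e k (hTr m))
    (Submodule.smul_mem _ z (hTr k))

theorem derivative_succ {R : Type*} [CommRing R] {q : ℕ} (hq : (q : R) = 0) (m k : ℕ) (z : R) :
    derivative (traceDifference q m (k + 1) z) = -C z := by
  have hpow : derivative (tracePolynomial R q m ^ q ^ (k + 1)) = 0 := by
    rw [derivative_pow, Nat.cast_pow, hq, zero_pow k.succ_ne_zero, C_0, zero_mul, zero_mul]
  rw [traceDifference, derivative_sub, hpow, derivative_C_mul, tracePolynomial.derivative_succ hq,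
    mul_one, zero_sub]

theorem separable_succ {R : Type*} [CommRing R] {q : ℕ} (hq : (q : R) = 0) (m k : ℕ) {z : R}
    (hz : IsUnit z) : (traceDifference q m (k + 1) z).Separable := by
  rw [separable_def, derivative_succ hq]
  exact isCoprime_one_right.of_isCoprime_of_dvd_right (isUnit_C.2 hz).neg.dvd

theorem natDegree_succ {R : Type*} [Ring R] [NoZeroDivisors R] [Nontrivial R] {q : ℕ}
    (hq : 1 < q) (m k : ℕ) (z : R) :
    (traceDifference q (m + 1) (k + 1) z).natDegree = q ^ (m + (k + 1)) := by
  have hlead : (tracePolynomial R q (m + 1) ^ q ^ (k + 1)).natDegree = q ^ (m + (k + 1)) := by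
    rw [natDegree_pow, tracePolynomial.natDegree_succ R hq, ← pow_add, add_comm]
  have hlow : (C z * tracePolynomial R q (k + 1)).natDegree ≤ q ^ k :=
    (natDegree_C_mul_le _ _).trans_eq (tracePolynomial.natDegree_succ R hq k)
  have hlt : q ^ k < q ^ (m + (k + 1)) := Nat.pow_lt_pow_right hq (by lia)
  rw [traceDifference, natDegree_sub_eq_left_of_natDegree_lt (by lia), hlead]

end traceDifference

end TraceDifference

theorem ncard_aeval_eq_zero_of_separable {K L : Type*} [Field K] [Field L] [Algebra K L]
    {f : K[X]} (hsep : f.Separable) (hsplit : (f.map (algebraMap K L)).Splits) :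
    {t : L | aeval t f = 0}.ncard = f.natDegree := by
  have hroots : {t : L | aeval t f = 0} = f.rootSet L :=
    Set.ext fun _ => (mem_rootSet_of_ne hsep.ne_zero).symm
  rw [hroots, ← Nat.card_coe_set_eq, Nat.card_eq_fintype_card,
    card_rootSet_eq_natDegree hsep hsplit]

theorem charP_ratFunc_of_card_eq_prime_pow {F : Type*} [Field F] [Fintype F] {p m : ℕ}
    (hp : p.Prime) (hF : Fintype.card F = p ^ m) : CharP (RatFunc F) p :=
  have : Fact p.Prime := ⟨hp⟩
  have : CharP F p := charP_of_card_eq_prime_pow hF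
  charP_of_injective_algebraMap (algebraMap F (RatFunc F)).injective p

theorem stmt_17_general {p e q n k : ℕ} (hp : p.Prime) (he : 0 < e) (hq : q = p ^ e)
    (hk : 1 ≤ k) (hkn : k < n) {K Ω : Type*} [Field K] [CharP K p] [Field Ω] [Algebra K Ω]
    {z : K} (hz : z ≠ 0) {g : K[X]} (hg : g = traceDifference q (n - k) k z)
    (hsplit : (g.map (algebraMap K Ω)).Splits) {S : Set Ω} (hS : S = {t | aeval t g = 0}) :
    g.Separable ∧ g.natDegree = q ^ (n - 1) ∧
    (0 : Ω) ∈ S ∧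
    (∀ s ∈ S, ∀ t ∈ S, s + t ∈ S) ∧
    (∀ c : Ω, c ^ q = c → ∀ t ∈ S, c * t ∈ S) ∧
    S.ncard = q ^ (n - 1) := by
  have : CharP Ω p := charP_of_injective_algebraMap (algebraMap K Ω).injective p
  have : ExpChar K p := .prime hp
  have : ExpChar Ω p := .prime hp
  have hq1 : 1 < q := hq ▸ Nat.one_lt_pow he.ne' hp.one_lt
  have hq0 : (q : K) = 0 := by rw [hq, Nat.cast_pow, CharP.cast_eq_zero, zero_pow he.ne']
  have hlin : g ∈ linearizedPolynomials K (p ^ e) := by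
    rw [hg, hq]
    exact traceDifference.mem_linearizedPolynomials p e (n - k) k z
  obtain ⟨k, rfl⟩ := Nat.exists_eq_add_of_le' hk
  obtain ⟨m, rfl⟩ := Nat.exists_eq_add_of_lt hkn
  have hsep : g.Separable := hg ▸ traceDifference.separable_succ hq0 _ k hz.isUnit
  have hdeg : g.natDegree = q ^ (k + 1 + m + 1 - 1) := by
    rw [hg, show k + 1 + m + 1 - (k + 1) = m + 1 by lia, traceDifference.natDegree_succ hq1,
      Nat.add_sub_cancel, add_comm m]
  have hmem (t : Ω) : t ∈ S ↔ aeval t g = 0 := by rw [hS, Set.mem_ofPred_eq]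
  simp only [hmem]
  refine ⟨hsep, hdeg, linearizedPolynomials.aeval_zero (by lia) hlin, fun s hs t ht => ?_,
    fun c hc t ht => ?_, ?_⟩
  · rw [linearizedPolynomials.aeval_add p e hlin, hs, ht, add_zero]
  · rw [linearizedPolynomials.aeval_mul hlin (hq ▸ hc), ht, mul_zero]
  · rw [hS, ncard_aeval_eq_zero_of_separable hsep hsplit, hdeg]

/-- Over `K = F_{q^n}(z)` with algebraic closure `Ω`, the polynomial
`g(T) = Tr_{n−k}(T)^{q^k} − z·Tr_k(T)` is separable of degree `q^{n−1}`, and its set of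
roots in `Ω` contains `0`, is closed under addition and under multiplication by the
elements of the copy of `F_q` inside `Ω` (the elements `c` with `c^q = c`), and has
exactly `q^{n−1}` elements. -/
theorem stmt_17 (p e q n k : ℕ) (hp : p.Prime) (he : 0 < e) (hq : q = p ^ e)
    (hn : 2 ≤ n) (hk1 : 1 ≤ k) (hkn : k < n)
    (F : Type*) [Field F] [Fintype F] (hF : Fintype.card F = q ^ n)
    (Ω : Type*) [Field Ω] [Algebra (RatFunc F) Ω] [IsAlgClosure (RatFunc F) Ω]
    (g : Polynomial (RatFunc F))
    (hg : g = (∑ j ∈ Finset.range (n - k), Polynomial.X ^ q ^ j) ^ q ^ k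
              - Polynomial.C (RatFunc.X : RatFunc F)
                  * (∑ j ∈ Finset.range k, Polynomial.X ^ q ^ j))
    (S : Set Ω) (hS : S = {t : Ω | Polynomial.aeval t g = 0}) :
    g.Separable ∧ g.natDegree = q ^ (n - 1) ∧
    (0 : Ω) ∈ S ∧
    (∀ s ∈ S, ∀ t ∈ S, s + t ∈ S) ∧
    (∀ c : Ω, c ^ q = c → ∀ t ∈ S, c * t ∈ S) ∧
    S.ncard = q ^ (n - 1) := by
  have := charP_ratFunc_of_card_eq_prime_pow (m := e * n) hp (by rw [hF, hq, pow_mul])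
  have := IsAlgClosure.isAlgClosed (RatFunc F) (K := Ω)
  exact stmt_17_general hp he hq hk1 hkn RatFunc.X_ne_zero hg (IsAlgClosed.splits _) hS
end

section
/- Let F be a field of characteristic p containing F_q, where q is a power of p. Let h(X) = Σ_{i=0}^{m} a_i X^{q^i} ∈ F[X] be a q-additive polynomial with a_0 ≠ 0 and a_m ≠ 0, and assume that all roots of h lie in F. Let M/F be a field extension, c ∈ F, and u ∈ M a root of h(X) − c. Then F(u)/F is a Galois extension, its Galois group is abelian, and every element σ of Gal(F(u)/F) satisfies σ^p = id (i.e., the Galois group is an elementary abelian p-group). -/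
set_option synthInstance.maxHeartbeats 1000000

/-!
The roots of `h - c` form a coset `u + V` of the additive group `V ⊆ F` of roots of `h`, because
`h(X) - c = h(X) - h(u) = h(X - u)`. Hence `F(u)` is the splitting field of the separable
polynomial `h - c`, and every automorphism is determined by the translation `u ↦ u + v`, `v ∈ V`,
so that the Galois group embeds into the additive group of `F`.
-/

open Polynomial IntermediateField

/-- A polynomial `f` over `R` is additive if `f(x + y) = f(x) + f(y)` holds for two indeterminates
`x` and `y`, and therefore for elements of every commutative `R`-algebra. Requiring the identity
only for `x, y ∈ R` would be too weak over finite fields. -/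
def IsAdditivePolynomial {R : Type*} [CommSemiring R] (f : R[X]) : Prop :=
  aeval (MvPolynomial.X 0 + MvPolynomial.X 1 : MvPolynomial (Fin 2) R) f =
    aeval (MvPolynomial.X 0) f + aeval (MvPolynomial.X 1) f

theorem isAdditivePolynomial_sum_C_mul_X_pow {R ι : Type*} [CommSemiring R] (p : ℕ) [ExpChar R p]
    (s : Finset ι) (a : ι → R) (n : ι → ℕ) :
    IsAdditivePolynomial (∑ i ∈ s, C (a i) * X ^ p ^ n i) := by
  simp only [IsAdditivePolynomial, map_sum, map_mul, map_pow, aeval_X, aeval_C,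
    add_pow_expChar_pow, mul_add, Finset.sum_add_distrib]

namespace IsAdditivePolynomial

theorem aeval_add {R A : Type*} [CommSemiring R] [CommSemiring A] [Algebra R A] {f : R[X]}
    (hf : IsAdditivePolynomial f) (x y : A) : aeval (x + y) f = aeval x f + aeval y f := by
  simpa only [map_add, ← aeval_algHom_apply, MvPolynomial.aeval_X, Matrix.cons_val_zero,
    Matrix.cons_val_one] using congrArg (MvPolynomial.aeval (R := R) ![x, y]) hf

theorem aeval_sub {R A : Type*} [CommSemiring R] [CommRing A] [Algebra R A] {f : R[X]}
    (hf : IsAdditivePolynomial f) (x y : A) : aeval (x - y) f = aeval x f - aeval y f := by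
  rw [eq_sub_iff_add_eq, ← hf.aeval_add, sub_add_cancel]

theorem map_sub_C {R A : Type*} [CommRing R] [CommRing A] [Algebra R A] {f : R[X]}
    (hf : IsAdditivePolynomial f) {c : R} {u : A} (hu : aeval u f = algebraMap R A c) :
    (f - C c).map (algebraMap R A) = (f.map (algebraMap R A)).comp (X - C u) := by
  have hCu : aeval (C u) f = C (algebraMap R A c) := by
    rw [← hu]
    exact aeval_algebraMap_apply A[X] u f
  have haeval (r : A[X]) : (f.map (algebraMap R A)).comp r = aeval r f := by
    rw [comp, eval₂_map, aeval_def]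
    rfl
  rw [haeval, hf.aeval_sub, hCu, ← haeval, comp_X, Polynomial.map_sub, map_C]

end IsAdditivePolynomial

theorem separable_comp_X_sub_C {R : Type*} [CommRing R] {f : R[X]} (hf : f.Separable) (r : R) :
    (f.comp (X - C r)).Separable := by
  rw [separable_def, derivative_comp, derivative_X_sub_C, one_mul]
  exact IsCoprime.map hf (compRingHom (X - C r))

theorem separable_of_derivative_eq_C {R : Type*} [CommSemiring R] {f : R[X]} {a : R}
    (ha : IsUnit a) (hf : derivative f = C a) : f.Separable := by
  rw [separable_def, hf]
  exact (isCoprime_one_right (x := f)).of_isCoprime_of_dvd_right (isUnit_C.mpr ha).dvd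

theorem derivative_sum_C_mul_X_pow_pow {R : Type*} [CommSemiring R] {q : ℕ} (hq : (q : R) = 0)
    (a : ℕ → R) (m : ℕ) :
    derivative (∑ i ∈ Finset.range (m + 1), C (a i) * X ^ q ^ i) = C (a 0) := by
  have hzero (i : ℕ) : derivative (C (a (i + 1)) * X ^ q ^ (i + 1)) = 0 := by
    rw [derivative_C_mul, derivative_X_pow, Nat.cast_pow, hq, zero_pow i.succ_ne_zero, C_0,
      zero_mul, mul_zero]
  rw [Finset.sum_range_succ', derivative_add, derivative_sum,
    Finset.sum_eq_zero fun i _ ↦ hzero i, zero_add, pow_zero, pow_one, derivative_C_mul,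
    derivative_X, mul_one]

theorem separable_sum_C_mul_X_pow_pow {R : Type*} [CommSemiring R] {q : ℕ} (hq : (q : R) = 0)
    {a : ℕ → R} (ha : IsUnit (a 0)) (m : ℕ) :
    (∑ i ∈ Finset.range (m + 1), C (a i) * X ^ q ^ i).Separable :=
  separable_of_derivative_eq_C ha (derivative_sum_C_mul_X_pow_pow hq a m)

theorem IsAdditivePolynomial.separable_sub_C {F K : Type*} [Field F] [CommRing K] [Nontrivial K]
    [Algebra F K] {f : F[X]} (hf : IsAdditivePolynomial f) (hsep : f.Separable) {c : F} {u : K}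
    (hu : aeval u f = algebraMap F K c) : (f - C c).Separable := by
  rw [← separable_map (algebraMap F K), hf.map_sub_C hu]
  exact separable_comp_X_sub_C hsep.map u

section SimpleExtension

variable {F M : Type*} [Field F] [Field M] [Algebra F M] {u : M}

theorem isGalois_adjoin_simple_of_splits {f : F[X]} (hsep : f.Separable)
    (hsplit : (f.map (algebraMap F F⟮u⟯)).Splits) (hu : aeval u f = 0) : IsGalois F F⟮u⟯ := by
  have hsplitM : (f.map (algebraMap F M)).Splits := by
    simpa only [Polynomial.map_map, ← IsScalarTower.algebraMap_eq] using
      hsplit.map (algebraMap F⟮u⟯ M)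
  have hroots : F⟮u⟯ = adjoin F (f.rootSet M) :=
    le_antisymm
      (adjoin_simple_le_iff.mpr
        (subset_adjoin F _ (mem_rootSet.mpr ⟨hsep.ne_zero, hu⟩)))
      (adjoin_le_iff.mpr ((splits_iff_mem hsplitM).mp hsplit))
  have : f.IsSplittingField F F⟮u⟯ := isSplittingField_iff.mpr ⟨hsplit, hroots⟩
  exact IsGalois.of_separable_splitting_field hsep

theorem adjoin_simple_algEquiv_ext {σ τ : F⟮u⟯ ≃ₐ[F] F⟮u⟯}
    (h : σ (AdjoinSimple.gen F u) = τ (AdjoinSimple.gen F u)) : σ = τ := by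
  refine AlgEquiv.coe_toAlgHom_injective (adjoin_algHom_ext F ?_)
  rintro x rfl
  exact h

end SimpleExtension

section Translation

variable {F K : Type*} [CommSemiring F] [CommSemiring K] [Algebra F K]

theorem mul_apply_comm_of_apply_eq_add {σ τ : K ≃ₐ[F] K} {u : K} {v w : F}
    (hσ : σ u = u + algebraMap F K v) (hτ : τ u = u + algebraMap F K w) :
    (σ * τ) u = (τ * σ) u := by
  simp only [AlgEquiv.mul_apply, hσ, hτ, map_add, AlgEquiv.commutes]
  exact add_right_comm ..

theorem pow_apply_of_apply_eq_add {σ : K ≃ₐ[F] K} {u : K} {v : F}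
    (hσ : σ u = u + algebraMap F K v) (n : ℕ) : (σ ^ n) u = u + algebraMap F K (n * v) := by
  induction n with
  | zero => simp
  | succ n ih =>
    rw [pow_succ', AlgEquiv.mul_apply, ih, map_add, hσ, AlgEquiv.commutes, add_assoc, ← map_add,
      Nat.cast_add_one, add_one_mul, add_comm v]

end Translation

theorem IsAdditivePolynomial.exists_algEquiv_apply_eq_add {F K : Type*} [Field F] [CommRing K]
    [IsDomain K] [Algebra F K] {f : F[X]} (hf : IsAdditivePolynomial f) (hf0 : f ≠ 0)
    (hsplit : f.Splits) {c : F} {u : K} (hu : aeval u f = algebraMap F K c) (σ : K ≃ₐ[F] K) :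
    ∃ v : F, σ u = u + algebraMap F K v := by
  have hroot : aeval (σ u - u) f = 0 := by
    rw [hf.aeval_sub, aeval_algHom_apply σ, hu, σ.commutes, sub_self]
  obtain ⟨v, hv⟩ := hsplit.mem_range_of_isRoot (i := algebraMap F K) hf0
    (by rwa [IsRoot, eval_map_algebraMap])
  exact ⟨v, by rw [hv, add_sub_cancel]⟩

theorem stmt_18_general (p : ℕ) {F M : Type*} [Field F] [CharP F p] [Field M] [Algebra F M]
    {h : F[X]} (hadd : IsAdditivePolynomial h) (hsep : h.Separable) (hsplit : h.Splits)
    {c : F} {u : M} (hu : aeval u h = algebraMap F M c) :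
    IsGalois F F⟮u⟯ ∧ (∀ σ τ : F⟮u⟯ ≃ₐ[F] F⟮u⟯, σ * τ = τ * σ) ∧
      ∀ σ : F⟮u⟯ ≃ₐ[F] F⟮u⟯, σ ^ p = 1 := by
  have hgen : aeval (AdjoinSimple.gen F u) h = algebraMap F F⟮u⟯ c :=
    Subtype.ext ((AdjoinSimple.coe_aeval_gen_apply F u h).trans hu)
  have htranslation := hadd.exists_algEquiv_apply_eq_add hsep.ne_zero hsplit hgen
  refine ⟨?_, fun σ τ ↦ ?_, fun σ ↦ ?_⟩
  · refine isGalois_adjoin_simple_of_splits (hadd.separable_sub_C hsep hgen) ?_ (by simp [hu])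
    rw [hadd.map_sub_C hgen]
    exact (hsplit.map _).comp_X_sub_C _
  · obtain ⟨v, hσ⟩ := htranslation σ
    obtain ⟨w, hτ⟩ := htranslation τ
    exact adjoin_simple_algEquiv_ext (mul_apply_comm_of_apply_eq_add hσ hτ)
  · obtain ⟨v, hσ⟩ := htranslation σ
    apply adjoin_simple_algEquiv_ext
    rw [pow_apply_of_apply_eq_add hσ, CharP.cast_eq_zero, zero_mul, map_zero, add_zero,
      AlgEquiv.one_apply]

/-- Let `F ⊇ F_q` be a field of characteristic `p`, and let
`h(X) = Σ_{i=0}^m a_i X^{q^i}` be a `q`-additive polynomial with `a_0 ≠ 0`, `a_m ≠ 0`,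
all of whose roots lie in `F`. If `u` is a root of `h(X) − c` (with `c ∈ F`) in an
extension `M/F`, then `F(u)/F` is Galois with an elementary abelian `p`-group as Galois
group. -/
theorem stmt_18 (p e q m : ℕ) (hp : p.Prime) (he : 0 < e) (hq : q = p ^ e)
    (Fq : Type*) [Field Fq] [Fintype Fq] (hFq : Fintype.card Fq = q)
    (F : Type*) [Field F] [CharP F p] [Algebra Fq F]
    (M : Type*) [Field M] [Algebra F M]
    (a : ℕ → F) (h : Polynomial F)
    (hh : h = ∑ i ∈ Finset.range (m + 1), Polynomial.C (a i) * Polynomial.X ^ q ^ i)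
    (ha0 : a 0 ≠ 0) (ham : a m ≠ 0)
    (hsplit : (h.map (RingHom.id F)).Splits)
    (c : F) (u : M) (hu : Polynomial.aeval u h = algebraMap F M c) :
    IsGalois F (IntermediateField.adjoin F {u}) ∧
    (∀ σ τ : (IntermediateField.adjoin F {u} : IntermediateField F M) ≃ₐ[F]
              (IntermediateField.adjoin F {u} : IntermediateField F M), σ * τ = τ * σ) ∧
    (∀ σ : (IntermediateField.adjoin F {u} : IntermediateField F M) ≃ₐ[F]
              (IntermediateField.adjoin F {u} : IntermediateField F M), σ ^ p = 1) := by
  have := Fact.mk hp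
  subst hh hq
  have hadd := isAdditivePolynomial_sum_C_mul_X_pow p (Finset.range (m + 1)) a (e * ·)
  have hsep := separable_sum_C_mul_X_pow_pow (q := p ^ e) (by simp [he.ne']) ha0.isUnit m
  exact stmt_18_general p (by simpa only [← pow_mul] using hadd) hsep
    (by rwa [Polynomial.map_id] at hsplit) hu
end
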